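/- arXiv:2602.06944 — 12 statements merged into one kernel-verified Lean document; each statement's English description precedes it below -/
import Mathlib

section
/- Suppose K is a stabilizing derivative-feedback gain and P is a symmetric positive definite real n×n matrix satisfying the policy-evaluation equation for K, and let K⁺ = −R⁻¹ Bᵀ A⁻ᵀ P be the policy-improvement update. Then I + B·K⁺ is invertible and (I + B·K⁺)⁻¹·A is Hurwitz; that is, the improved gain K⁺ is again a stabilizing derivative-feedback gain. -/
open Matrix MeasureTheory Filter Topology

/-- A real square matrix is Hurwitz if every complex eigenvalue has strictly
negative real part. -/
def IsHurwitz {n : ℕ} (M : Matrix (Fin n) (Fin n) ℝ) : Prop :=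
  ∀ μ ∈ spectrum ℂ (M.map (Complex.ofReal)), μ.re < 0

/-- A derivative-feedback gain `K` is stabilizing if `I + B * K` is invertible
and `(I + B * K)⁻¹ * A` is Hurwitz. -/
def IsStabilizing {n m : ℕ} (A : Matrix (Fin n) (Fin n) ℝ) (B : Matrix (Fin n) (Fin m) ℝ)
    (K : Matrix (Fin m) (Fin n) ℝ) : Prop :=
  IsUnit (1 + B * K) ∧ IsHurwitz ((1 + B * K)⁻¹ * A)

/-- The policy-evaluation (Lyapunov) equation for the gain `K`:
`P (A⁻¹(I + BK)) + (A⁻¹(I + BK))ᵀ P + Q + Kᵀ R K = 0`. -/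
def PolicyEval {n m : ℕ} (A : Matrix (Fin n) (Fin n) ℝ) (B : Matrix (Fin n) (Fin m) ℝ)
    (Q : Matrix (Fin n) (Fin n) ℝ) (R : Matrix (Fin m) (Fin m) ℝ)
    (K : Matrix (Fin m) (Fin n) ℝ) (P : Matrix (Fin n) (Fin n) ℝ) : Prop :=
  P * (A⁻¹ * (1 + B * K)) + (A⁻¹ * (1 + B * K))ᵀ * P + Q + Kᵀ * R * K = 0

/-- The policy-improvement update: `K⁺ = −R⁻¹ Bᵀ A⁻ᵀ P`. -/
noncomputable def ImprovedGain {n m : ℕ} (A : Matrix (Fin n) (Fin n) ℝ) (B : Matrix (Fin n) (Fin m) ℝ)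
    (R : Matrix (Fin m) (Fin m) ℝ) (P : Matrix (Fin n) (Fin n) ℝ) :
    Matrix (Fin m) (Fin n) ℝ :=
  -(R⁻¹ * Bᵀ * (A⁻¹)ᵀ * P)

/-- The derivative-feedback algebraic Riccati equation:
`P A⁻¹ + A⁻ᵀ P − P A⁻¹ B R⁻¹ Bᵀ A⁻ᵀ P + Q = 0`. -/
def SolvesARE {n m : ℕ} (A : Matrix (Fin n) (Fin n) ℝ) (B : Matrix (Fin n) (Fin m) ℝ)
    (Q : Matrix (Fin n) (Fin n) ℝ) (R : Matrix (Fin m) (Fin m) ℝ)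
    (P : Matrix (Fin n) (Fin n) ℝ) : Prop :=
  P * A⁻¹ + (A⁻¹)ᵀ * P - P * A⁻¹ * B * R⁻¹ * Bᵀ * (A⁻¹)ᵀ * P + Q = 0

def EigPair {n : ℕ} (M : Matrix (Fin n) (Fin n) ℝ) (a b : ℝ) (x y : Fin n → ℝ) : Prop :=
  (x ≠ 0 ∨ y ≠ 0) ∧ M *ᵥ x = a • x - b • y ∧ M *ᵥ y = b • x + a • y

lemma mem_spectrum_iff_eigPair {n : ℕ} (M : Matrix (Fin n) (Fin n) ℝ) (μ : ℂ) :
    μ ∈ spectrum ℂ (M.map (Complex.ofReal)) ↔ ∃ x y, EigPair M μ.re μ.im x y := by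
  have h1 : μ ∈ spectrum ℂ (M.map (Complex.ofReal)) ↔
      ∃ v : Fin n → ℂ, v ≠ 0 ∧ (M.map (Complex.ofReal)) *ᵥ v = μ • v := by
    rw [spectrum.mem_iff, Matrix.isUnit_iff_isUnit_det, isUnit_iff_ne_zero, not_not,
      ← Matrix.exists_mulVec_eq_zero_iff]
    refine exists_congr fun v => and_congr_right fun _ => ?_
    rw [Matrix.sub_mulVec, sub_eq_zero, Algebra.algebraMap_eq_smul_one, Matrix.smul_mulVec,
      Matrix.one_mulVec, eq_comm]
  rw [h1]
  constructor
  · rintro ⟨v, hv, h⟩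
    refine ⟨fun i => (v i).re, fun i => (v i).im, ?_, ?_, ?_⟩
    · by_contra! hc
      apply hv
      ext i
      exact Complex.ext (congrFun hc.1 i) (congrFun hc.2 i)
    · ext i
      have := congrArg Complex.re (congrFun h i)
      simpa [Matrix.mulVec, dotProduct] using this
    · ext i
      have := congrArg Complex.im (congrFun h i)
      simp [Matrix.mulVec, dotProduct] at this ⊢
      linarith
  · rintro ⟨x, y, h0, hx, hy⟩
    refine ⟨fun i => ⟨x i, y i⟩, ?_, ?_⟩
    · intro hc
      rcases h0 with h0 | h0
      · exact h0 (funext fun i => congrArg Complex.re (congrFun hc i))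
      · exact h0 (funext fun i => congrArg Complex.im (congrFun hc i))
    · ext i
      have h1 := congrFun hx i
      have h2 := congrFun hy i
      simp [Matrix.mulVec, dotProduct] at h1 h2
      apply Complex.ext
      · simp [Matrix.mulVec, dotProduct]
        linarith
      · simp [Matrix.mulVec, dotProduct]
        linarith

lemma EigPair.inv {n : ℕ} {M N : Matrix (Fin n) (Fin n) ℝ} (hNM : N * M = 1) {a b : ℝ}
    {x y : Fin n → ℝ} (h : EigPair M a b x y) :
    0 < a ^ 2 + b ^ 2 ∧ EigPair N (a / (a ^ 2 + b ^ 2)) (-b / (a ^ 2 + b ^ 2)) x y := by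
  obtain ⟨h0, hx, hy⟩ := h
  have ex : x = a • N *ᵥ x - b • N *ᵥ y := by
    have := congrArg (fun v => N *ᵥ v) hx
    simpa [Matrix.mulVec_mulVec, hNM, Matrix.mulVec_sub, Matrix.mulVec_smul] using this
  have ey : y = b • N *ᵥ x + a • N *ᵥ y := by
    have := congrArg (fun v => N *ᵥ v) hy
    simpa [Matrix.mulVec_mulVec, hNM, Matrix.mulVec_add, Matrix.mulVec_smul] using this
  have hs : 0 < a ^ 2 + b ^ 2 := by
    by_contra hc
    have ha : a = 0 := by nlinarith [sq_nonneg a, sq_nonneg b]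
    have hb : b = 0 := by nlinarith [sq_nonneg a, sq_nonneg b]
    subst ha hb
    simp at ex ey
    rcases h0 with h0 | h0
    · exact h0 ex
    · exact h0 ey
  refine ⟨hs, h0, ?_, ?_⟩
  · ext i
    have h1 := congrFun ex i
    have h2 := congrFun ey i
    simp at h1 h2 ⊢
    field_simp
    linear_combination (-a) * h1 - b * h2
  · ext i
    have h1 := congrFun ex i
    have h2 := congrFun ey i
    simp at h1 h2 ⊢
    field_simp
    linear_combination b * h1 - a * h2

lemma improvement_identity {n m : ℕ}
    (A : Matrix (Fin n) (Fin n) ℝ) (B : Matrix (Fin n) (Fin m) ℝ)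
    (Q : Matrix (Fin n) (Fin n) ℝ) (R : Matrix (Fin m) (Fin m) ℝ)
    (hR : R.PosDef)
    (K : Matrix (Fin m) (Fin n) ℝ) (P : Matrix (Fin n) (Fin n) ℝ)
    (hP : P.PosDef) (hPE : PolicyEval A B Q R K P)
    (L : Matrix (Fin m) (Fin n) ℝ) (hL : L = ImprovedGain A B R P) :
    P * (A⁻¹ * (1 + B * L)) + (A⁻¹ * (1 + B * L))ᵀ * P
      + (Q + Lᵀ * R * L + (L - K)ᵀ * R * (L - K)) = 0 := by
  have hRt : Rᵀ = R := by simpa using hR.isHermitian.eq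
  have hPt : Pᵀ = P := by simpa using hP.isHermitian.eq
  have hRu : R * R⁻¹ = 1 := Matrix.mul_nonsing_inv R ((Matrix.isUnit_iff_isUnit_det R).1 hR.isUnit)
  have e1 : Bᵀ * (A⁻¹)ᵀ * P = -(R * L) := by
    rw [hL, ImprovedGain, Matrix.mul_neg, neg_neg]
    simp only [← Matrix.mul_assoc]
    rw [hRu, Matrix.one_mul]
  have e2 : P * A⁻¹ * B = -(Lᵀ * R) := by
    have := congrArg Matrix.transpose e1
    simpa only [Matrix.transpose_mul, Matrix.transpose_neg, Matrix.transpose_transpose, hRt, hPt,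
      ← Matrix.mul_assoc] using this
  have key : ∀ X : Matrix (Fin m) (Fin n) ℝ,
      P * (A⁻¹ * (1 + B * X)) + (A⁻¹ * (1 + B * X))ᵀ * P
      = P * A⁻¹ + (A⁻¹)ᵀ * P - Lᵀ * R * X - Xᵀ * R * L := by
    intro X
    have t1 : P * (A⁻¹ * (1 + B * X)) = P * A⁻¹ + (P * A⁻¹ * B) * X := by
      simp only [Matrix.mul_add, Matrix.mul_one, Matrix.mul_assoc]
    have t2 : (A⁻¹ * (1 + B * X))ᵀ * P = (A⁻¹)ᵀ * P + Xᵀ * (Bᵀ * (A⁻¹)ᵀ * P) := by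
      simp only [Matrix.transpose_mul, Matrix.transpose_add, Matrix.transpose_one, Matrix.add_mul,
        Matrix.one_mul, Matrix.mul_assoc]
    rw [t1, t2, e1, e2]
    simp only [Matrix.mul_neg, Matrix.neg_mul, Matrix.mul_assoc]
    abel
  unfold PolicyEval at hPE
  rw [key] at hPE ⊢
  rw [← hPE]
  simp only [Matrix.transpose_sub, Matrix.sub_mul, Matrix.mul_sub]
  abel

lemma improvement_core {n m : ℕ}
    (A : Matrix (Fin n) (Fin n) ℝ) (B : Matrix (Fin n) (Fin m) ℝ)
    (Q : Matrix (Fin n) (Fin n) ℝ) (R : Matrix (Fin m) (Fin m) ℝ)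
    (hA : IsUnit A) (hQ : Q.PosSemidef) (hR : R.PosDef)
    (K : Matrix (Fin m) (Fin n) ℝ) (P : Matrix (Fin n) (Fin n) ℝ)
    (hK : IsStabilizing A B K) (hP : P.PosDef)
    (hPE : PolicyEval A B Q R K P)
    (L : Matrix (Fin m) (Fin n) ℝ) (hL : L = ImprovedGain A B R P)
    (a b : ℝ) (x y : Fin n → ℝ) (h : EigPair (A⁻¹ * (1 + B * L)) a b x y) : a < 0 := by
  have hid := improvement_identity A B Q R hR K P hP hPE L hL
  have hPt : Pᵀ = P := by simpa using hP.isHermitian.eq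
  set G := A⁻¹ * (1 + B * L) with hG
  obtain ⟨h0, hx, hy⟩ := h
  have psym : ∀ u v : Fin n → ℝ, u ⬝ᵥ (P *ᵥ v) = v ⬝ᵥ (P *ᵥ u) := by
    intro u v
    rw [Matrix.dotProduct_mulVec, ← Matrix.mulVec_transpose, hPt, dotProduct_comm]
  have quad : ∀ u : Fin n → ℝ, 2 * (u ⬝ᵥ (P *ᵥ (G *ᵥ u))) + (u ⬝ᵥ (Q *ᵥ u)
      + (L *ᵥ u) ⬝ᵥ (R *ᵥ (L *ᵥ u)) + ((L - K) *ᵥ u) ⬝ᵥ (R *ᵥ ((L - K) *ᵥ u))) = 0 := by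
    intro u
    have h1 := congrArg (fun M => u ⬝ᵥ (M *ᵥ u)) hid
    have tr : ∀ {k : ℕ} (S : Matrix (Fin k) (Fin n) ℝ) (w : Fin k → ℝ),
        u ⬝ᵥ (Sᵀ *ᵥ w) = (S *ᵥ u) ⬝ᵥ w := by
      intro k S w
      rw [Matrix.dotProduct_mulVec, Matrix.vecMul_transpose]
    simp only [Matrix.add_mulVec, dotProduct_add, ← Matrix.mulVec_mulVec, tr,
      Matrix.zero_mulVec, dotProduct_zero] at h1
    rw [psym (G *ᵥ u) u] at h1
    linarith
  have qx := quad x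
  have qy := quad y
  rw [hx, Matrix.mulVec_sub, Matrix.mulVec_smul, Matrix.mulVec_smul, dotProduct_sub,
    dotProduct_smul, dotProduct_smul, smul_eq_mul, smul_eq_mul] at qx
  rw [hy, Matrix.mulVec_add, Matrix.mulVec_smul, Matrix.mulVec_smul, dotProduct_add,
    dotProduct_smul, dotProduct_smul, smul_eq_mul, smul_eq_mul, psym y x] at qy
  have Qn : ∀ u : Fin n → ℝ, 0 ≤ u ⬝ᵥ (Q *ᵥ u) := fun u => by
    simpa using hQ.dotProduct_mulVec_nonneg u
  have Rn : ∀ u : Fin m → ℝ, 0 ≤ u ⬝ᵥ (R *ᵥ u) := fun u => by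
    simpa using hR.posSemidef.dotProduct_mulVec_nonneg u
  have Rp : ∀ u : Fin m → ℝ, u ⬝ᵥ (R *ᵥ u) ≤ 0 → u = 0 := fun u hu => by
    by_contra hc
    have : 0 < u ⬝ᵥ (R *ᵥ u) := by simpa using hR.dotProduct_mulVec_pos hc
    linarith
  have Pn : ∀ u : Fin n → ℝ, 0 ≤ u ⬝ᵥ (P *ᵥ u) := fun u => by
    simpa using hP.posSemidef.dotProduct_mulVec_nonneg u
  by_contra ha
  push Not at ha
  have a1 := mul_nonneg ha (Pn x)
  have a2 := mul_nonneg ha (Pn y)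
  have dx : (L - K) *ᵥ x = 0 := Rp _ (by
    linarith [Qn x, Qn y, Rn (L *ᵥ x), Rn (L *ᵥ y), Rn ((L - K) *ᵥ y)])
  have dy : (L - K) *ᵥ y = 0 := Rp _ (by
    linarith [Qn x, Qn y, Rn (L *ᵥ x), Rn (L *ᵥ y), Rn ((L - K) *ᵥ x)])
  have same : ∀ u, (L - K) *ᵥ u = 0 → (A⁻¹ * (1 + B * K)) *ᵥ u = G *ᵥ u := by
    intro u hu
    rw [Matrix.sub_mulVec, sub_eq_zero] at hu
    rw [hG]
    simp only [← Matrix.mulVec_mulVec, Matrix.add_mulVec, hu]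
  have hE : EigPair (A⁻¹ * (1 + B * K)) a b x y :=
    ⟨h0, by rw [same x dx, hx], by rw [same y dy, hy]⟩
  have hinv : ((1 + B * K)⁻¹ * A) * (A⁻¹ * (1 + B * K)) = 1 := by
    rw [Matrix.mul_assoc, ← Matrix.mul_assoc A,
      Matrix.mul_nonsing_inv A ((Matrix.isUnit_iff_isUnit_det A).1 hA), Matrix.one_mul,
      Matrix.nonsing_inv_mul _ ((Matrix.isUnit_iff_isUnit_det _).1 hK.1)]
  obtain ⟨hs, hE'⟩ := hE.inv hinv
  have := hK.2 ⟨a / (a ^ 2 + b ^ 2), -b / (a ^ 2 + b ^ 2)⟩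
    ((mem_spectrum_iff_eigPair _ _).2 ⟨x, y, hE'⟩)
  have h3 : 0 ≤ a / (a ^ 2 + b ^ 2) := div_nonneg ha hs.le
  simp only at this
  linarith

/-- Policy improvement preserves stabilizability: if `K` is a stabilizing
derivative-feedback gain and `P > 0` solves the policy-evaluation equation for `K`,
then the improved gain `K⁺ = −R⁻¹ Bᵀ A⁻ᵀ P` is again stabilizing, i.e.
`I + B K⁺` is invertible and `(I + B K⁺)⁻¹ A` is Hurwitz. -/
theorem policy_improvement_stabilizing {n m : ℕ} (hn : 0 < n) (hm : 0 < m)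
    (A : Matrix (Fin n) (Fin n) ℝ) (B : Matrix (Fin n) (Fin m) ℝ)
    (Q : Matrix (Fin n) (Fin n) ℝ) (R : Matrix (Fin m) (Fin m) ℝ)
    (hA : IsUnit A) (hQ : Q.PosSemidef) (hR : R.PosDef)
    (K : Matrix (Fin m) (Fin n) ℝ) (P : Matrix (Fin n) (Fin n) ℝ)
    (hK : IsStabilizing A B K) (hP : P.PosDef)
    (hPE : PolicyEval A B Q R K P) :
    IsStabilizing A B (ImprovedGain A B R P) := by
  have core := improvement_core A B Q R hA hQ hR K P hK hP hPE _ rfl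
  set L := ImprovedGain A B R P
  have hu : IsUnit (1 + B * L) := by
    rw [Matrix.isUnit_iff_isUnit_det, isUnit_iff_ne_zero]
    intro hd
    obtain ⟨v, hv, h⟩ := Matrix.exists_mulVec_eq_zero_iff.2 hd
    have := core 0 0 v 0 ⟨Or.inl hv, by rw [← Matrix.mulVec_mulVec, h]; simp, by simp⟩
    exact lt_irrefl _ this
  refine ⟨hu, fun μ hμ => ?_⟩
  obtain ⟨x, y, hE⟩ := (mem_spectrum_iff_eigPair _ _).1 hμ
  have hinv : (A⁻¹ * (1 + B * L)) * ((1 + B * L)⁻¹ * A) = 1 := by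
    rw [Matrix.mul_assoc, ← Matrix.mul_assoc (1 + B * L),
      Matrix.mul_nonsing_inv _ ((Matrix.isUnit_iff_isUnit_det _).1 hu), Matrix.one_mul,
      Matrix.nonsing_inv_mul _ ((Matrix.isUnit_iff_isUnit_det _).1 hA)]
  obtain ⟨hs, hE'⟩ := hE.inv hinv
  have h3 := core _ _ _ _ hE'
  by_contra hc
  push Not at hc
  exact absurd h3 (not_lt.2 (div_nonneg hc hs.le))
end

section
/- Suppose K is a stabilizing derivative-feedback gain, P is a symmetric positive definite solution of the policy-evaluation equation for K, K⁺ = −R⁻¹ Bᵀ A⁻ᵀ P, and P⁺ is a symmetric positive definite solution of the policy-evaluation equation for K⁺. Then P − P⁺ is positive semidefinite, i.e., the value matrices decrease monotonically in the Loewner order under policy iteration. -/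
open Matrix MeasureTheory Filter Topology

lemma ofReal_mulVec_split {n : ℕ} (M : Matrix (Fin n) (Fin n) ℝ) (x : Fin n → ℂ) (i : Fin n) :
    ((M.map Complex.ofReal) *ᵥ x) i =
      ⟨(M *ᵥ fun j => (x j).re) i, (M *ᵥ fun j => (x j).im) i⟩ := by
  apply Complex.ext
  · simp [Matrix.mulVec, dotProduct]
  · simp [Matrix.mulVec, dotProduct]

lemma ofReal_mulVec_zero {n : ℕ} (M : Matrix (Fin n) (Fin n) ℝ) (x : Fin n → ℂ) :
    (M.map Complex.ofReal) *ᵥ x = 0 ↔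
      (M *ᵥ fun j => (x j).re) = 0 ∧ (M *ᵥ fun j => (x j).im) = 0 := by
  simp only [funext_iff, ofReal_mulVec_split, Complex.ext_iff, Pi.zero_apply, Complex.zero_re,
    Complex.zero_im, forall_and]

lemma core_contra {n : ℕ} (W F P G : Matrix (Fin n) (Fin n) ℝ) (hP : P.PosDef)
    (hW : ∃ v : Fin n → ℝ, v ≠ 0 ∧ W *ᵥ v = 0)
    (hinv : ∀ x, W *ᵥ x = 0 → W *ᵥ (F *ᵥ x) = 0)
    (hskew : ∀ x, W *ᵥ x = 0 → x ⬝ᵥ (P *ᵥ (F *ᵥ x)) = 0)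
    (hG : ∀ x, W *ᵥ x = 0 → G *ᵥ (F *ᵥ x) = x)
    (hH : IsHurwitz G) : False := by
  classical
  let V : Submodule ℂ (Fin n → ℂ) := LinearMap.ker (Matrix.toLin' (W.map Complex.ofReal))
  have hV : ∀ x, x ∈ V ↔ (W *ᵥ fun j => (x j).re) = 0 ∧ (W *ᵥ fun j => (x j).im) = 0 := by
    intro x
    rw [← ofReal_mulVec_zero]
    simp [V]
  have hre : ∀ x : Fin n → ℂ, (fun j => (((F.map Complex.ofReal) *ᵥ x) j).re)
      = F *ᵥ fun j => (x j).re := by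
    intro x; funext i; simp [ofReal_mulVec_split]
  have him : ∀ x : Fin n → ℂ, (fun j => (((F.map Complex.ofReal) *ᵥ x) j).im)
      = F *ᵥ fun j => (x j).im := by
    intro x; funext i; simp [ofReal_mulVec_split]
  have hVF : ∀ x ∈ V, Matrix.toLin' (F.map Complex.ofReal) x ∈ V := by
    intro x hx
    rw [hV] at hx ⊢
    rw [Matrix.toLin'_apply, hre, him]
    exact ⟨hinv _ hx.1, hinv _ hx.2⟩
  obtain ⟨v, hv0, hv⟩ := hW
  have hne : Nontrivial V := by
    refine ⟨⟨⟨fun i => (v i : ℂ), ?_⟩, 0, ?_⟩⟩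
    · rw [hV]
      refine ⟨by simpa using hv, ?_⟩
      have : (fun _ : Fin n => (0:ℝ)) = 0 := rfl
      simp [this]
    · intro h
      apply hv0
      have h1 := congrArg Subtype.val h
      funext i
      simpa using congrFun h1 i
  obtain ⟨l, hl⟩ := Module.End.exists_eigenvalue ((Matrix.toLin' (F.map Complex.ofReal)).restrict hVF)
  obtain ⟨⟨x, hxV⟩, hx⟩ := hl.exists_hasEigenvector
  have hx0 : x ≠ 0 := fun h => hx.2 (Subtype.ext h)
  have hFx : (F.map Complex.ofReal) *ᵥ x = l • x := by
    have := congrArg Subtype.val hx.apply_eq_smul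
    simpa using this
  have hxx := (hV x).1 hxV
  have hGx : (G.map Complex.ofReal) *ᵥ (l • x) = x := by
    rw [← hFx]
    funext i
    rw [ofReal_mulVec_split, hre, him, hG _ hxx.1, hG _ hxx.2]
  have h1 := hskew _ hxx.1
  have h2 := hskew _ hxx.2
  rw [← hre, hFx] at h1
  rw [← him, hFx] at h2
  set u : Fin n → ℝ := fun j => (x j).re with hu
  set w : Fin n → ℝ := fun j => (x j).im with hw
  have e1 : (fun j => ((l • x) j).re) = l.re • u - l.im • w := by
    funext j; simp [u, w]
  have e2 : (fun j => ((l • x) j).im) = l.re • w + l.im • u := by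
    funext j; simp [u, w]
  rw [e1] at h1
  rw [e2] at h2
  have hsym : w ⬝ᵥ (P *ᵥ u) = u ⬝ᵥ (P *ᵥ w) := by
    have hPT : Pᵀ = P := by simpa [Matrix.IsSymm] using hP.1
    rw [Matrix.dotProduct_mulVec, ← Matrix.mulVec_transpose, hPT, dotProduct_comm]
  simp only [Matrix.mulVec_add, Matrix.mulVec_sub, Matrix.mulVec_smul, dotProduct_add,
    dotProduct_sub, dotProduct_smul, smul_eq_mul] at h1 h2
  have hpu : 0 ≤ u ⬝ᵥ (P *ᵥ u) := by simpa using hP.posSemidef.dotProduct_mulVec_nonneg u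
  have hpw : 0 ≤ w ⬝ᵥ (P *ᵥ w) := by simpa using hP.posSemidef.dotProduct_mulVec_nonneg w
  have hpos : 0 < u ⬝ᵥ (P *ᵥ u) + w ⬝ᵥ (P *ᵥ w) := by
    by_cases h : u = 0
    · have hw0 : w ≠ 0 := by
        intro h'
        apply hx0
        funext j
        exact Complex.ext (congrFun h j) (congrFun h' j)
      have : 0 < w ⬝ᵥ (P *ᵥ w) := by simpa using hP.dotProduct_mulVec_pos hw0
      linarith
    · have : 0 < u ⬝ᵥ (P *ᵥ u) := by simpa using hP.dotProduct_mulVec_pos h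
      linarith
  have hlre : l.re = 0 := by
    have : l.re * (u ⬝ᵥ (P *ᵥ u) + w ⬝ᵥ (P *ᵥ w)) = 0 := by
      rw [hsym] at h2; linarith
    exact (mul_eq_zero.1 this).resolve_right hpos.ne'
  have hl0 : l ≠ 0 := by
    rintro rfl
    apply hx0
    rw [← hGx]; simp
  have hGe : (G.map Complex.ofReal) *ᵥ x = l⁻¹ • x := by
    rw [Matrix.mulVec_smul] at hGx
    conv_rhs => rw [← hGx]
    rw [smul_smul, inv_mul_cancel₀ hl0, one_smul]
  have hspec : l⁻¹ ∈ spectrum ℂ (G.map Complex.ofReal) := by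
    rw [← Matrix.spectrum_toLin']
    apply Module.End.HasEigenvalue.mem_spectrum
    refine Module.End.hasEigenvalue_of_hasEigenvector (x := x) ⟨?_, hx0⟩
    rw [Module.End.mem_eigenspace_iff]
    simpa using hGe
  have := hH _ hspec
  rw [Complex.inv_re, hlre] at this
  simp at this

lemma exists_shift {n : ℕ} (D P : Matrix (Fin n) (Fin n) ℝ) (hD : D.IsHermitian)
    (hP : P.PosDef) (hneg : ¬ D.PosSemidef) :
    ∃ c : ℝ, 0 < c ∧ (D + c • P).PosSemidef ∧ ∃ v, v ≠ 0 ∧ (D + c • P) *ᵥ v = 0 := by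
  have hpp : ∀ x : Fin n → ℝ, x ≠ 0 → 0 < x ⬝ᵥ (P *ᵥ x) := fun x hx => by
    simpa using hP.dotProduct_mulVec_pos hx
  have hex : ∃ y : Fin n → ℝ, y ⬝ᵥ (D *ᵥ y) < 0 := by
    by_contra! h
    exact hneg (Matrix.PosSemidef.of_dotProduct_mulVec_nonneg hD fun x => by simpa using h x)
  obtain ⟨y, hy⟩ := hex
  have hy0 : y ≠ 0 := by rintro rfl; simp at hy
  let f : (Fin n → ℝ) → ℝ := fun x => (x ⬝ᵥ (D *ᵥ x)) / (x ⬝ᵥ (P *ᵥ x))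
  have hscale : ∀ (a : ℝ) (x : Fin n → ℝ), a ≠ 0 → f (a • x) = f x := by
    intro a x ha
    simp only [f, Matrix.mulVec_smul, dotProduct_smul, smul_dotProduct, smul_eq_mul]
    rw [mul_div_mul_left _ _ ha, mul_div_mul_left _ _ ha]
  have hmem : ∀ x : Fin n → ℝ, x ≠ 0 → ‖x‖⁻¹ • x ∈ Metric.sphere (0 : Fin n → ℝ) 1 := by
    intro x hx
    have : ‖x‖ ≠ 0 := norm_ne_zero_iff.2 hx
    simp [norm_smul, this]
  have hs0 : ∀ x ∈ Metric.sphere (0 : Fin n → ℝ) 1, x ≠ 0 := by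
    rintro x hx rfl; simp at hx
  have hcont : ContinuousOn f (Metric.sphere (0 : Fin n → ℝ) 1) := by
    apply ContinuousOn.div
    · apply Continuous.continuousOn; fun_prop
    · apply Continuous.continuousOn; fun_prop
    · intro x hx; exact (hpp x (hs0 x hx)).ne'
  obtain ⟨v, hv, hmin⟩ := (isCompact_sphere (0 : Fin n → ℝ) 1).exists_isMinOn
    ⟨_, hmem y hy0⟩ hcont
  have hv0 := hs0 v hv
  have hmin' : ∀ x : Fin n → ℝ, x ≠ 0 → f v ≤ f x := by
    intro x hx
    have h := hmin (hmem x hx)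
    simp only [Set.mem_ofPred_eq] at h
    rwa [hscale _ _ (inv_ne_zero (norm_ne_zero_iff.2 hx))] at h
  have hquad : ∀ x : Fin n → ℝ, x ⬝ᵥ ((D + (-f v) • P) *ᵥ x)
      = x ⬝ᵥ (D *ᵥ x) - f v * (x ⬝ᵥ (P *ᵥ x)) := by
    intro x
    simp only [Matrix.add_mulVec, Matrix.smul_mulVec, dotProduct_add, dotProduct_smul, smul_eq_mul]
    ring
  have hps : (D + (-f v) • P).PosSemidef := by
    apply Matrix.PosSemidef.of_dotProduct_mulVec_nonneg
    · refine hD.add ?_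
      have := hP.1
      unfold Matrix.IsHermitian at this ⊢
      rw [Matrix.conjTranspose_smul, this]; simp
    · intro x
      rw [star_trivial, hquad]
      by_cases hx : x = 0
      · simp [hx]
      · have := (le_div_iff₀ (hpp x hx)).1 (hmin' x hx)
        linarith
  refine ⟨-f v, ?_, hps, v, hv0, ?_⟩
  · have h1 := hmin' y hy0
    have h2 : f y < 0 := div_neg_of_neg_of_pos hy (hpp y hy0)
    linarith
  · rw [← hps.dotProduct_mulVec_zero_iff, star_trivial, hquad]
    simp only [f]
    rw [div_mul_cancel₀ _ (hpp v hv0).ne', sub_self]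

/-- Loewner monotonicity of policy iteration: if `P > 0` solves the
policy-evaluation equation for a stabilizing gain `K`, `K⁺ = −R⁻¹ Bᵀ A⁻ᵀ P`,
and `P⁺ > 0` solves the policy-evaluation equation for `K⁺`, then
`P − P⁺` is positive semidefinite. -/
theorem policy_iteration_monotone {n m : ℕ} (hn : 0 < n) (hm : 0 < m)
    (A : Matrix (Fin n) (Fin n) ℝ) (B : Matrix (Fin n) (Fin m) ℝ)
    (Q : Matrix (Fin n) (Fin n) ℝ) (R : Matrix (Fin m) (Fin m) ℝ)
    (hA : IsUnit A) (hQ : Q.PosSemidef) (hR : R.PosDef)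
    (K : Matrix (Fin m) (Fin n) ℝ) (P Pplus : Matrix (Fin n) (Fin n) ℝ)
    (hK : IsStabilizing A B K) (hP : P.PosDef)
    (hPE : PolicyEval A B Q R K P)
    (hPplus : Pplus.PosDef)
    (hPEplus : PolicyEval A B Q R (ImprovedGain A B R P) Pplus) :
    (P - Pplus).PosSemidef := by
  by_contra hneg
  obtain ⟨hU, hH⟩ := hK
  have hPT : Pᵀ = P := by simpa [Matrix.IsSymm] using hP.1
  have hRT : Rᵀ = R := by simpa [Matrix.IsSymm] using hR.1
  have hdA : IsUnit A.det := (Matrix.isUnit_iff_isUnit_det A).1 hA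
  have hdR : IsUnit R.det := (Matrix.isUnit_iff_isUnit_det R).1 hR.isUnit
  have hdU : IsUnit (1 + B * K).det := (Matrix.isUnit_iff_isUnit_det _).1 hU
  unfold PolicyEval at hPE hPEplus
  set L := ImprovedGain A B R P with hL
  have hRL : R * L = -((A⁻¹ * B)ᵀ * P) := by
    rw [hL, ImprovedGain, Matrix.mul_neg, Matrix.transpose_mul]
    simp only [Matrix.mul_assoc]
    rw [Matrix.mul_nonsing_inv_cancel_left _ _ hdR]
  have hLR : Lᵀ * R = -(P * (A⁻¹ * B)) := by
    have := congrArg Matrix.transpose hRL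
    simpa [Matrix.transpose_mul, hRT, hPT] using this
  set F := A⁻¹ * (1 + B * L) with hF
  have hFK : A⁻¹ * (1 + B * K) = F - A⁻¹ * B * (L - K) := by
    rw [hF]; simp only [Matrix.mul_add, Matrix.mul_sub, Matrix.mul_assoc]; abel
  clear_value F
  set S := (L - K)ᵀ * R * (L - K) with hS
  have hPF : P * F + Fᵀ * P = -(Q + Lᵀ * R * L + S) := by
    have a1 : P * (A⁻¹ * B * (L - K)) = -(Lᵀ * R * (L - K)) := by
      rw [hLR, ← Matrix.mul_assoc, Matrix.neg_mul, neg_neg]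
    have a2 : (A⁻¹ * B * (L - K))ᵀ * P = -((L - K)ᵀ * R * L) := by
      rw [Matrix.transpose_mul, Matrix.mul_assoc, Matrix.mul_assoc, hRL, Matrix.mul_neg, neg_neg]
    rw [hFK, Matrix.mul_sub, Matrix.transpose_sub, Matrix.sub_mul, a1, a2] at hPE
    rw [← sub_eq_zero, ← hPE, hS]
    simp only [Matrix.mul_sub, Matrix.sub_mul, Matrix.transpose_sub]
    abel
  have hDF : (P - Pplus) * F + Fᵀ * (P - Pplus) = -S := by
    have : (P - Pplus) * F + Fᵀ * (P - Pplus) = (P * F + Fᵀ * P)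
        - (Pplus * F + Fᵀ * Pplus + Q + Lᵀ * R * L) + (Q + Lᵀ * R * L) := by
      simp only [Matrix.mul_sub, Matrix.sub_mul]; abel
    rw [this, hPEplus, hPF]; abel
  have hDH : (P - Pplus).IsHermitian := hP.1.sub hPplus.1
  obtain ⟨c, hc, hW, v, hv0, hv⟩ := exists_shift _ P hDH hP hneg
  set W := P - Pplus + c • P with hWdef
  have hWT : Wᵀ = W := by simpa [Matrix.IsSymm] using hW.1
  have hWF : W * F + Fᵀ * W = -(S + c • (Q + Lᵀ * R * L + S)) := by
    have : W * F + Fᵀ * W = ((P - Pplus) * F + Fᵀ * (P - Pplus)) + c • (P * F + Fᵀ * P) := by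
      rw [hWdef]
      simp only [Matrix.add_mul, Matrix.mul_add, Matrix.smul_mul, Matrix.mul_smul, smul_add]
      abel
    rw [this, hDF, hPF, smul_neg, neg_add]
  have tr : ∀ (Z : Matrix (Fin n) (Fin n) ℝ) (x y : Fin n → ℝ),
      x ⬝ᵥ (Zᵀ *ᵥ y) = (Z *ᵥ x) ⬝ᵥ y := by
    intro Z x y
    rw [Matrix.dotProduct_mulVec, Matrix.vecMul_transpose]
  have trm : ∀ (Z : Matrix (Fin m) (Fin n) ℝ) (x : Fin n → ℝ),
      x ⬝ᵥ ((Zᵀ * R * Z) *ᵥ x) = (Z *ᵥ x) ⬝ᵥ (R *ᵥ (Z *ᵥ x)) := by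
    intro Z x
    rw [Matrix.mul_assoc, ← Matrix.mulVec_mulVec, Matrix.dotProduct_mulVec, Matrix.vecMul_transpose,
      Matrix.mulVec_mulVec]
  have hRn : ∀ z : Fin m → ℝ, 0 ≤ z ⬝ᵥ (R *ᵥ z) := fun z => by
    simpa using hR.posSemidef.dotProduct_mulVec_nonneg z
  have hR0 : ∀ z : Fin m → ℝ, z ⬝ᵥ (R *ᵥ z) = 0 → z = 0 := fun z hz => by
    by_contra h
    have : 0 < z ⬝ᵥ (R *ᵥ z) := by simpa using hR.dotProduct_mulVec_pos h
    linarith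
  have key : ∀ x, W *ᵥ x = 0 → Q *ᵥ x = 0 ∧ L *ᵥ x = 0 ∧ (L - K) *ᵥ x = 0 := by
    intro x hx
    have h1 : x ⬝ᵥ ((W * F + Fᵀ * W) *ᵥ x) = 0 := by
      have h2 : x ⬝ᵥ (W *ᵥ (F *ᵥ x)) = 0 := by
        conv_lhs => rw [← hWT]
        rw [tr, hx, zero_dotProduct]
      rw [Matrix.add_mulVec, ← Matrix.mulVec_mulVec, ← Matrix.mulVec_mulVec, hx,
        dotProduct_add, h2]
      simp
    rw [hWF] at h1
    simp only [Matrix.neg_mulVec, Matrix.add_mulVec, Matrix.smul_mulVec, dotProduct_neg,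
      dotProduct_add, dotProduct_smul, smul_eq_mul, hS, trm] at h1
    have q1 : 0 ≤ x ⬝ᵥ (Q *ᵥ x) := by simpa using hQ.dotProduct_mulVec_nonneg x
    have q2 := hRn (L *ᵥ x)
    have q3 := hRn ((L - K) *ᵥ x)
    have m1 := mul_nonneg hc.le q1
    have m2 := mul_nonneg hc.le q2
    have m3 := mul_nonneg hc.le q3
    refine ⟨?_, hR0 _ ?_, hR0 _ ?_⟩
    · rw [← hQ.dotProduct_mulVec_zero_iff, star_trivial]
      refine (mul_eq_zero.1 (?_ : c * _ = 0)).resolve_left hc.ne'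
      linarith
    · refine (mul_eq_zero.1 (?_ : c * _ = 0)).resolve_left hc.ne'
      linarith
    · linarith
  have hTx : ∀ x, W *ᵥ x = 0 → (Q + Lᵀ * R * L + S) *ᵥ x = 0 ∧ S *ᵥ x = 0 := by
    intro x hx
    obtain ⟨k1, k2, k3⟩ := key x hx
    have hs : S *ᵥ x = 0 := by rw [hS, ← Matrix.mulVec_mulVec, k3, Matrix.mulVec_zero]
    refine ⟨?_, hs⟩
    rw [Matrix.add_mulVec, Matrix.add_mulVec, hs, k1, ← Matrix.mulVec_mulVec, k2,
      Matrix.mulVec_zero]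
    simp
  refine core_contra W F P _ hP ⟨v, hv0, hv⟩ ?_ ?_ ?_ hH
  · intro x hx
    obtain ⟨t1, t2⟩ := hTx x hx
    have h : (W * F + Fᵀ * W) *ᵥ x = 0 := by
      rw [hWF, Matrix.neg_mulVec, Matrix.add_mulVec, Matrix.smul_mulVec, t1, t2]; simp
    rw [Matrix.add_mulVec, ← Matrix.mulVec_mulVec, ← Matrix.mulVec_mulVec, hx,
      Matrix.mulVec_zero, add_zero] at h
    exact h
  · intro x hx
    obtain ⟨t1, t2⟩ := hTx x hx
    have h : x ⬝ᵥ ((P * F + Fᵀ * P) *ᵥ x) = 0 := by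
      rw [hPF, Matrix.neg_mulVec, t1]; simp
    rw [Matrix.add_mulVec, ← Matrix.mulVec_mulVec, ← Matrix.mulVec_mulVec, dotProduct_add, tr] at h
    have h2 : (F *ᵥ x) ⬝ᵥ (P *ᵥ x) = x ⬝ᵥ (P *ᵥ (F *ᵥ x)) := by
      conv_rhs => rw [← hPT, tr]
      rw [dotProduct_comm]
    rw [h2] at h
    linarith
  · intro x hx
    obtain ⟨k1, k2, k3⟩ := key x hx
    have h : F *ᵥ x = (A⁻¹ * (1 + B * K)) *ᵥ x := by
      rw [hFK, Matrix.sub_mulVec, ← Matrix.mulVec_mulVec x _ (L - K), k3]; simp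
    rw [h, Matrix.mulVec_mulVec, Matrix.mul_assoc, Matrix.mul_nonsing_inv_cancel_left _ _ hdA,
      Matrix.nonsing_inv_mul _ hdU, Matrix.one_mulVec]
end

section
/- Let P* be a symmetric positive definite solution of the derivative-feedback algebraic Riccati equation. Then for every stabilizing derivative-feedback gain K and every symmetric positive definite solution P of the policy-evaluation equation for K, the matrix P − P* is positive semidefinite; that is, the Riccati solution is a Loewner lower bound for the value matrix of any stabilizing policy. -/
open Matrix MeasureTheory Filter Topology

lemma aux_sq {n m : ℕ}
    (A : Matrix (Fin n) (Fin n) ℝ) (B : Matrix (Fin n) (Fin m) ℝ)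
    (Q : Matrix (Fin n) (Fin n) ℝ) (R : Matrix (Fin m) (Fin m) ℝ) (hR : R.PosDef)
    (Ps : Matrix (Fin n) (Fin n) ℝ) (hPs : Psᵀ = Ps) (hARE : SolvesARE A B Q R Ps)
    (K : Matrix (Fin m) (Fin n) ℝ) (P : Matrix (Fin n) (Fin n) ℝ)
    (hPE : PolicyEval A B Q R K P) :
    ∃ S : Matrix (Fin n) (Fin n) ℝ, S.PosSemidef ∧
      (P - Ps) * (A⁻¹ * (1 + B * K)) + (A⁻¹ * (1 + B * K))ᵀ * (P - Ps) = -S := by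
  have hRT : Rᵀ = R := by simpa using hR.isHermitian.eq
  have hRu : IsUnit R.det := (Matrix.isUnit_iff_isUnit_det R).1 hR.isUnit
  set L : Matrix (Fin m) (Fin n) ℝ := R⁻¹ * (Bᵀ * ((A⁻¹)ᵀ * Ps)) with hL
  have hRL : R * L = Bᵀ * ((A⁻¹)ᵀ * Ps) := by
    rw [hL, ← Matrix.mul_assoc, Matrix.mul_nonsing_inv _ hRu, Matrix.one_mul]
  have hLR : Lᵀ * R = Ps * (A⁻¹ * B) := by
    have := congrArg Matrix.transpose hRL
    simpa [Matrix.transpose_mul, hRT, hPs, Matrix.mul_assoc] using this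
  refine ⟨(K + L)ᵀ * R * (K + L), ?_, ?_⟩
  · have := hR.posSemidef.conjTranspose_mul_mul_same (K + L)
    simpa using this
  · have e1 : (K + L)ᵀ * R * (K + L) = Kᵀ * R * K + Kᵀ * (Bᵀ * ((A⁻¹)ᵀ * Ps))
        + Ps * (A⁻¹ * B) * K + Ps * (A⁻¹ * B) * L := by
      rw [← hLR, ← hRL, Matrix.transpose_add]
      simp only [Matrix.add_mul, Matrix.mul_add, Matrix.mul_assoc]
      abel
    have e2 : Ps * (A⁻¹ * B) * L = Ps * A⁻¹ + (A⁻¹)ᵀ * Ps + Q := by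
      unfold SolvesARE at hARE
      rw [hL]
      simp only [Matrix.mul_assoc] at hARE ⊢
      rw [← sub_eq_zero, ← neg_eq_zero, ← hARE]
      abel
    have e3 : P * (A⁻¹ * (1 + B * K)) + (A⁻¹ * (1 + B * K))ᵀ * P = - (Q + Kᵀ * R * K) := by
      unfold PolicyEval at hPE
      rw [eq_neg_iff_add_eq_zero, ← hPE]
      abel
    have e4 : Ps * (A⁻¹ * (1 + B * K)) + (A⁻¹ * (1 + B * K))ᵀ * Ps =
        Ps * A⁻¹ + (A⁻¹)ᵀ * Ps + Ps * (A⁻¹ * B) * K + Kᵀ * (Bᵀ * ((A⁻¹)ᵀ * Ps)) := by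
      simp only [Matrix.transpose_mul, Matrix.transpose_add, Matrix.transpose_one,
        Matrix.mul_add, Matrix.add_mul, Matrix.mul_one, Matrix.one_mul, Matrix.mul_assoc]
      abel
    rw [e1, e2, Matrix.sub_mul, Matrix.mul_sub,
      show ∀ a b c d : Matrix (Fin n) (Fin n) ℝ, a - b + (c - d) = (a + c) - (b + d) from
        fun a b c d => by abel, e3, e4]
    abel

lemma aux_tr {n : ℕ} (M X : Matrix (Fin n) (Fin n) ℝ) (hX : Xᵀ = X) (a : Fin n → ℝ) :
    a ⬝ᵥ ((X * M + Mᵀ * X) *ᵥ a) = 2 * ((X *ᵥ a) ⬝ᵥ (M *ᵥ a)) := by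
  rw [Matrix.add_mulVec, dotProduct_add, ← Matrix.mulVec_mulVec, ← Matrix.mulVec_mulVec,
    Matrix.dotProduct_mulVec a X, Matrix.dotProduct_mulVec a Mᵀ, Matrix.vecMul_transpose,
    ← Matrix.mulVec_transpose X, hX, dotProduct_comm (M *ᵥ a)]
  ring

lemma aux_psd0 {n : ℕ} (Y : Matrix (Fin n) (Fin n) ℝ) (hY : Y.PosSemidef) (a : Fin n → ℝ)
    (h : a ⬝ᵥ (Y *ᵥ a) = 0) : Y *ᵥ a = 0 := by
  have := (hY.dotProduct_mulVec_zero_iff a).1 (by simpa using h)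
  exact this

/-- Minimal shift. -/
lemma aux_min {n : ℕ} (X P : Matrix (Fin n) (Fin n) ℝ) (hX : Xᵀ = X) (hP : P.PosDef)
    (h : ¬ X.PosSemidef) :
    ∃ t : ℝ, 0 < t ∧ (X + t • P).PosSemidef ∧ ∃ v : Fin n → ℝ, v ≠ 0 ∧ (X + t • P) *ᵥ v = 0 := by
  have hXH : X.IsHermitian := by simpa [Matrix.IsHermitian] using hX
  have hex : ∃ u : Fin n → ℝ, u ⬝ᵥ (X *ᵥ u) < 0 := by
    by_contra hc
    push Not at hc
    exact h (Matrix.PosSemidef.of_dotProduct_mulVec_nonneg hXH (by simpa using hc))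
  obtain ⟨u, hu⟩ := hex
  have hpos : ∀ v : Fin n → ℝ, v ≠ 0 → 0 < v ⬝ᵥ (P *ᵥ v) := fun v hv => by
    simpa using hP.dotProduct_mulVec_pos hv
  have hu0 : u ≠ 0 := by rintro rfl; simp at hu
  let f : (Fin n → ℝ) → ℝ := fun v => (v ⬝ᵥ (X *ᵥ v)) / (v ⬝ᵥ (P *ᵥ v))
  have hscale : ∀ (c : ℝ) (v : Fin n → ℝ), c ≠ 0 → f (c • v) = f v := by
    intro c v hc
    simp only [f, Matrix.mulVec_smul, smul_dotProduct, dotProduct_smul, smul_eq_mul]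
    rw [mul_div_mul_left _ _ hc, mul_div_mul_left _ _ hc]
  have hcont : ContinuousOn f (Metric.sphere 0 1) := by
    apply ContinuousOn.div
    · fun_prop
    · fun_prop
    · intro v hv
      refine (hpos v ?_).ne'
      rintro rfl
      simp at hv
  have hnorm : ∀ v : Fin n → ℝ, v ≠ 0 → ‖v‖⁻¹ • v ∈ Metric.sphere (0 : Fin n → ℝ) 1 := by
    intro v hv
    simp [norm_smul, norm_ne_zero_iff.2 hv]
  obtain ⟨v, hv, hmin⟩ := (isCompact_sphere (0 : Fin n → ℝ) 1).exists_isMinOn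
    ⟨_, hnorm u hu0⟩ hcont
  have hv0 : v ≠ 0 := by rintro rfl; simp at hv
  have hmin' : ∀ w : Fin n → ℝ, w ≠ 0 → f v ≤ f w := by
    intro w hw
    have := hmin (hnorm w hw)
    simp only [Set.mem_ofPred_eq] at this
    rwa [hscale _ _ (inv_ne_zero (norm_ne_zero_iff.2 hw))] at this
  have hval : ∀ w : Fin n → ℝ, w ⬝ᵥ ((X + (- f v) • P) *ᵥ w) =
      w ⬝ᵥ (X *ᵥ w) - f v * (w ⬝ᵥ (P *ᵥ w)) := by
    intro w
    rw [Matrix.add_mulVec, dotProduct_add, Matrix.smul_mulVec, dotProduct_smul, smul_eq_mul]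
    ring
  have hpsd : (X + (- f v) • P).PosSemidef := by
    refine Matrix.PosSemidef.of_dotProduct_mulVec_nonneg ?_ ?_
    · refine hXH.add ?_
      have := hP.isHermitian
      simp only [Matrix.IsHermitian, Matrix.conjTranspose_smul] at this ⊢
      rw [this, star_trivial]
    · intro w
      rw [star_trivial, hval]
      by_cases hw : w = 0
      · simp [hw]
      · have := hmin' w hw
        simp only [f] at this ⊢
        rw [le_div_iff₀ (hpos w hw)] at this
        linarith
  refine ⟨- f v, ?_, hpsd, v, hv0, aux_psd0 _ hpsd v ?_⟩
  · have h1 := hmin' u hu0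
    have h2 : f u < 0 := div_neg_of_neg_of_pos hu (hpos u hu0)
    linarith
  · rw [hval]
    simp only [f]
    rw [div_mul_cancel₀ _ (hpos v hv0).ne', sub_self]

lemma aux_re {n : ℕ} (M : Matrix (Fin n) (Fin n) ℝ) (w : Fin n → ℂ) :
    (fun i => ((M.map Complex.ofReal *ᵥ w) i).re) = M *ᵥ (fun i => (w i).re) := by
  ext i
  simp [Matrix.mulVec, dotProduct]

lemma aux_im {n : ℕ} (M : Matrix (Fin n) (Fin n) ℝ) (w : Fin n → ℂ) :
    (fun i => ((M.map Complex.ofReal *ᵥ w) i).im) = M *ᵥ (fun i => (w i).im) := by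
  ext i
  simp [Matrix.mulVec, dotProduct]

lemma aux_zero {n : ℕ} (M : Matrix (Fin n) (Fin n) ℝ) (w : Fin n → ℂ) :
    M.map Complex.ofReal *ᵥ w = 0 ↔
      M *ᵥ (fun i => (w i).re) = 0 ∧ M *ᵥ (fun i => (w i).im) = 0 := by
  rw [← aux_re, ← aux_im]
  constructor
  · intro h
    rw [h]
    constructor <;> · ext i; simp
  · rintro ⟨h1, h2⟩
    ext i
    exact Complex.ext (congrFun h1 i) (congrFun h2 i)

lemma aux_main {n : ℕ} (M H X P S W : Matrix (Fin n) (Fin n) ℝ) (hHM : H * M = 1)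
    (hH : IsHurwitz H) (hX : Xᵀ = X) (hP : P.PosDef) (hS : S.PosSemidef) (hW : W.PosSemidef)
    (e1 : X * M + Mᵀ * X = -S) (e2 : P * M + Mᵀ * P = -W) : X.PosSemidef := by
  by_contra hneg
  obtain ⟨t, ht, hY, v, hv, hYv⟩ := aux_min X P hX hP hneg
  have hPT : Pᵀ = P := by simpa using hP.isHermitian.eq
  set Y := X + t • P with hYdef
  have hYT : Yᵀ = Y := by simp [hYdef, hX, hPT]
  have e3 : Y * M + Mᵀ * Y = -(S + t • W) := by
    have : Y * M + Mᵀ * Y = (X * M + Mᵀ * X) + t • (P * M + Mᵀ * P) := by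
      simp only [hYdef, Matrix.add_mul, Matrix.mul_add, Matrix.smul_mul, Matrix.mul_smul, smul_add]
      abel
    rw [this, e1, e2, smul_neg]
    abel
  have key : ∀ a : Fin n → ℝ, Y *ᵥ a = 0 → Y *ᵥ (M *ᵥ a) = 0 ∧ (P *ᵥ a) ⬝ᵥ (M *ᵥ a) = 0 := by
    intro a ha
    have h1 := aux_tr M Y hYT a
    rw [ha, zero_dotProduct, mul_zero, e3, Matrix.neg_mulVec, dotProduct_neg, Matrix.add_mulVec,
      dotProduct_add, Matrix.smul_mulVec, dotProduct_smul, smul_eq_mul] at h1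
    have hs : 0 ≤ a ⬝ᵥ (S *ᵥ a) := by simpa using hS.dotProduct_mulVec_nonneg a
    have hw : 0 ≤ a ⬝ᵥ (W *ᵥ a) := by simpa using hW.dotProduct_mulVec_nonneg a
    have htw : 0 ≤ t * (a ⬝ᵥ (W *ᵥ a)) := by positivity
    have hs0 : a ⬝ᵥ (S *ᵥ a) = 0 := by linarith
    have hw0 : a ⬝ᵥ (W *ᵥ a) = 0 := by
      have : t * (a ⬝ᵥ (W *ᵥ a)) = 0 := by linarith
      exact (mul_eq_zero.1 this).resolve_left ht.ne'
    have hSa := aux_psd0 S hS a hs0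
    have hWa := aux_psd0 W hW a hw0
    constructor
    · have := congrArg (fun Z => Z *ᵥ a) e3
      simp only [Matrix.add_mulVec, ← Matrix.mulVec_mulVec, ha, Matrix.mulVec_zero, add_zero,
        Matrix.neg_mulVec, Matrix.smul_mulVec, hSa, hWa, smul_zero, neg_zero] at this
      exact this
    · have h2 := aux_tr M P hPT a
      rw [e2, Matrix.neg_mulVec, hWa, neg_zero, dotProduct_zero] at h2
      linarith
  -- complex eigenvector in the kernel
  let N : Submodule ℂ (Fin n → ℂ) := LinearMap.ker (Matrix.toLin' (Y.map Complex.ofReal))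
  have hN : ∀ w, w ∈ N ↔ Y *ᵥ (fun i => (w i).re) = 0 ∧ Y *ᵥ (fun i => (w i).im) = 0 := by
    intro w
    rw [← aux_zero]
    simp [N, LinearMap.mem_ker]
  have hinv : ∀ w ∈ N, Matrix.toLin' (M.map Complex.ofReal) w ∈ N := by
    intro w hw
    rw [hN] at hw ⊢
    rw [Matrix.toLin'_apply, aux_re, aux_im]
    exact ⟨(key _ hw.1).1, (key _ hw.2).1⟩
  have hvN : (fun i => (v i : ℂ)) ∈ N := by
    rw [hN]
    refine ⟨by simpa using hYv, ?_⟩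
    simp only [Complex.ofReal_im]
    exact Matrix.mulVec_zero Y
  haveI : Nontrivial N := by
    refine ⟨⟨⟨_, hvN⟩, 0, ?_⟩⟩
    intro h
    apply hv
    have h' := congrArg Subtype.val h
    ext i
    have := congrFun h' i
    simpa using this
  obtain ⟨μ, hμ⟩ := Module.End.exists_eigenvalue
    ((Matrix.toLin' (M.map Complex.ofReal)).restrict hinv)
  obtain ⟨w, hw⟩ := hμ.exists_hasEigenvector
  have hwe : M.map Complex.ofReal *ᵥ (w : Fin n → ℂ) = μ • (w : Fin n → ℂ) := by
    have := congrArg Subtype.val hw.apply_eq_smul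
    simpa using this
  have hw0 : (w : Fin n → ℂ) ≠ 0 := fun h => hw.2 (Subtype.ext h)
  have hwN := (hN w).1 w.2
  generalize (w : Fin n → ℂ) = z at hwe hw0 hwN
  -- real part
  set a : Fin n → ℝ := fun i => (z i).re with ha
  set b : Fin n → ℝ := fun i => (z i).im with hb
  have hMa : M *ᵥ a = μ.re • a - μ.im • b := by
    rw [← aux_re, hwe]
    ext i
    simp [a, b]
  have hMb : M *ᵥ b = μ.re • b + μ.im • a := by
    rw [← aux_im, hwe]
    ext i
    simp [a, b]
  have k1 := (key a hwN.1).2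
  have k2 := (key b hwN.2).2
  have hsym : (P *ᵥ a) ⬝ᵥ b = (P *ᵥ b) ⬝ᵥ a := by
    rw [dotProduct_comm, Matrix.dotProduct_mulVec, ← Matrix.mulVec_transpose, hPT]
  rw [hMa, dotProduct_sub, dotProduct_smul, dotProduct_smul, smul_eq_mul, smul_eq_mul] at k1
  rw [hMb, dotProduct_add, dotProduct_smul, dotProduct_smul, smul_eq_mul, smul_eq_mul] at k2
  have hge : ∀ c : Fin n → ℝ, 0 ≤ (P *ᵥ c) ⬝ᵥ c := fun c => by
    rw [dotProduct_comm]
    simpa using hP.posSemidef.dotProduct_mulVec_nonneg c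
  have hgt : ∀ c : Fin n → ℝ, c ≠ 0 → 0 < (P *ᵥ c) ⬝ᵥ c := fun c hc => by
    rw [dotProduct_comm]
    simpa using hP.dotProduct_mulVec_pos hc
  have hsum : 0 < (P *ᵥ a) ⬝ᵥ a + (P *ᵥ b) ⬝ᵥ b := by
    by_cases h0 : a = 0
    · have hb0 : b ≠ 0 := by
        intro h1
        apply hw0
        ext i
        exact Complex.ext (congrFun h0 i) (congrFun h1 i)
      linarith [hge a, hgt b hb0]
    · linarith [hge b, hgt a h0]
  have hre : μ.re = 0 := by
    have : μ.re * ((P *ᵥ a) ⬝ᵥ a + (P *ᵥ b) ⬝ᵥ b) = 0 := by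
      rw [hsym] at k1
      linarith
    exact (mul_eq_zero.1 this).resolve_right hsum.ne'
  have hHMc : H.map Complex.ofReal * M.map Complex.ofReal = 1 := by
    have h := Matrix.map_mul (L := H) (M := M) (f := Complex.ofRealHom)
    rw [hHM] at h
    have h2 : (1 : Matrix (Fin n) (Fin n) ℝ).map Complex.ofRealHom = 1 :=
      Matrix.map_one _ (map_zero _) (map_one _)
    rw [h2] at h
    exact h.symm
  have hz : z = μ • (H.map Complex.ofReal *ᵥ z) := by
    rw [← Matrix.mulVec_smul, ← hwe, Matrix.mulVec_mulVec, hHMc, Matrix.one_mulVec]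
  have hμ0 : μ ≠ 0 := by
    rintro rfl
    exact hw0 (by rw [hz, zero_smul])
  have hHz : H.map Complex.ofReal *ᵥ z = μ⁻¹ • z := by
    rw [eq_inv_smul_iff₀ hμ0]
    exact hz.symm
  have hspec : μ⁻¹ ∈ spectrum ℂ (H.map Complex.ofReal) := by
    rw [← Matrix.spectrum_toLin']
    apply Module.End.HasEigenvalue.mem_spectrum
    apply Module.End.hasEigenvalue_of_hasEigenvector (x := z)
    refine ⟨?_, hw0⟩
    rw [Module.End.mem_eigenspace_iff, Matrix.toLin'_apply]
    exact hHz
  have := hH _ hspec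
  rw [Complex.inv_re, hre, zero_div] at this
  exact lt_irrefl _ this

/-- The Riccati solution is a Loewner lower bound: if `P* > 0` solves the
derivative-feedback ARE, then for every stabilizing gain `K` and every `P > 0`
solving the policy-evaluation equation for `K`, the matrix `P − P*` is
positive semidefinite. -/
theorem riccati_solution_lower_bound {n m : ℕ} (hn : 0 < n) (hm : 0 < m)
    (A : Matrix (Fin n) (Fin n) ℝ) (B : Matrix (Fin n) (Fin m) ℝ)
    (Q : Matrix (Fin n) (Fin n) ℝ) (R : Matrix (Fin m) (Fin m) ℝ)
    (hA : IsUnit A) (hQ : Q.PosSemidef) (hR : R.PosDef)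
    (Pstar : Matrix (Fin n) (Fin n) ℝ)
    (hPstar : Pstar.PosDef) (hARE : SolvesARE A B Q R Pstar) :
    ∀ (K : Matrix (Fin m) (Fin n) ℝ) (P : Matrix (Fin n) (Fin n) ℝ),
      IsStabilizing A B K → P.PosDef → PolicyEval A B Q R K P →
      (P - Pstar).PosSemidef := by
  intro K P hK hP hPE
  have hPsT : Pstarᵀ = Pstar := by simpa using hPstar.isHermitian.eq
  have hPT : Pᵀ = P := by simpa using hP.isHermitian.eq
  obtain ⟨S, hS, hSe⟩ := aux_sq A B Q R hR Pstar hPsT hARE K P hPE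
  have hAd : IsUnit A.det := (Matrix.isUnit_iff_isUnit_det A).1 hA
  have hKd : IsUnit (1 + B * K).det := (Matrix.isUnit_iff_isUnit_det _).1 hK.1
  refine aux_main (A⁻¹ * (1 + B * K)) ((1 + B * K)⁻¹ * A) (P - Pstar) P S (Q + Kᵀ * R * K)
    ?_ hK.2 (by simp [hPT, hPsT]) hP hS ?_ hSe ?_
  · rw [Matrix.mul_assoc, ← Matrix.mul_assoc A, Matrix.mul_nonsing_inv _ hAd, Matrix.one_mul,
      Matrix.nonsing_inv_mul _ hKd]
  · refine hQ.add ?_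
    have := hR.posSemidef.conjTranspose_mul_mul_same K
    simpa using this
  · unfold PolicyEval at hPE
    rw [eq_neg_iff_add_eq_zero, ← hPE]
    abel
end

section
/- Let P* be a symmetric positive definite solution of the derivative-feedback algebraic Riccati equation and K* = −R⁻¹ Bᵀ A⁻ᵀ P*. Let K₁ be a stabilizing derivative-feedback gain and let sequences (Pᵢ)ᵢ≥1, (Kᵢ)ᵢ≥1 be such that K₁ is the given initial gain, for each i the matrix Pᵢ is a symmetric positive definite solution of the policy-evaluation equation for Kᵢ, and Kᵢ₊₁ = −R⁻¹ Bᵀ A⁻ᵀ Pᵢ. Then Pᵢ converges to P* and Kᵢ converges to K* as i → ∞ (entrywise, equivalently in any matrix norm). -/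
open Matrix MeasureTheory Filter Topology

section Helpers
open scoped ComplexOrder

/-- complexification -/
noncomputable def cpx {n m : ℕ} (M : Matrix (Fin n) (Fin m) ℝ) : Matrix (Fin n) (Fin m) ℂ :=
  M.map Complex.ofReal

lemma cpx_mul {n m k : ℕ} (M : Matrix (Fin n) (Fin m) ℝ) (N : Matrix (Fin m) (Fin k) ℝ) :
    cpx (M * N) = cpx M * cpx N :=
  Matrix.map_mul (f := Complex.ofRealHom)

lemma cpx_add {n m : ℕ} (M N : Matrix (Fin n) (Fin m) ℝ) :
    cpx (M + N) = cpx M + cpx N := by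
  ext i j; simp [cpx]

lemma cpx_sub {n m : ℕ} (M N : Matrix (Fin n) (Fin m) ℝ) :
    cpx (M - N) = cpx M - cpx N := by
  ext i j; simp [cpx]

lemma cpx_neg {n m : ℕ} (M : Matrix (Fin n) (Fin m) ℝ) :
    cpx (-M) = -cpx M := by
  ext i j; simp [cpx]

lemma cpx_transpose {n m : ℕ} (M : Matrix (Fin n) (Fin m) ℝ) :
    cpx (Mᵀ) = (cpx M)ᴴ := by
  ext i j; simp [cpx]

lemma cpx_transpose' {n m : ℕ} (M : Matrix (Fin n) (Fin m) ℝ) :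
    cpx (Mᵀ) = (cpx M)ᵀ := by
  ext i j; simp [cpx]

lemma cpx_one {n : ℕ} : cpx (1 : Matrix (Fin n) (Fin n) ℝ) = 1 := by
  ext i j; by_cases h : i = j <;> simp [cpx, Matrix.one_apply, h]

lemma cpx_zero {n m : ℕ} : cpx (0 : Matrix (Fin n) (Fin m) ℝ) = 0 := by
  ext i j; simp [cpx]

open scoped MatrixOrder in
lemma cpx_psd {n : ℕ} {W : Matrix (Fin n) (Fin n) ℝ} (h : W.PosSemidef) : (cpx W).PosSemidef := by
  obtain ⟨b, rfl⟩ := CStarAlgebra.nonneg_iff_eq_star_mul_self.1 (Matrix.nonneg_iff_posSemidef.2 h)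
  have : star b = bᵀ := by
    ext i j; simp
  rw [this, cpx_mul, cpx_transpose]
  exact Matrix.posSemidef_conjTranspose_mul_self _

lemma cpx_inj {n : ℕ} {W : Matrix (Fin n) (Fin n) ℝ} (h : W.PosDef) {z : Fin n → ℂ}
    (hz : cpx W *ᵥ z = 0) : z = 0 := by
  have h1 : W⁻¹ * W = 1 := Matrix.nonsing_inv_mul _ ((Matrix.isUnit_iff_isUnit_det _).1 h.isUnit)
  have h2 : (cpx (W⁻¹ * W)) *ᵥ z = 0 := by
    rw [cpx_mul, ← Matrix.mulVec_mulVec, hz, Matrix.mulVec_zero]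
  simpa [h1, cpx_one] using h2

lemma trans_of_psd {n : ℕ} {W : Matrix (Fin n) (Fin n) ℝ} (h : W.PosSemidef) : Wᵀ = W := by
  have := h.1
  simpa [Matrix.IsHermitian] using this

/-- no eigenvalue on the imaginary axis -/
def NoImag {n : ℕ} (M : Matrix (Fin n) (Fin n) ℝ) : Prop :=
  ∀ (μ : ℂ) (z : Fin n → ℂ), z ≠ 0 → cpx M *ᵥ z = μ • z → μ.re ≠ 0

lemma mem_spec_iff {n : ℕ} (N : Matrix (Fin n) (Fin n) ℂ) (μ : ℂ) :
    μ ∈ spectrum ℂ N ↔ (algebraMap ℂ _ μ - N).det = 0 := by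
  rw [spectrum.mem_iff, Matrix.isUnit_iff_isUnit_det, isUnit_iff_ne_zero, not_not]

lemma det_iff {n : ℕ} (N : Matrix (Fin n) (Fin n) ℂ) (μ : ℂ) :
    (algebraMap ℂ _ μ - N).det = 0 ↔ ∃ z, z ≠ 0 ∧ N *ᵥ z = μ • z := by
  rw [← Matrix.exists_mulVec_eq_zero_iff]
  refine exists_congr fun z => and_congr_right fun _ => ?_
  rw [Matrix.sub_mulVec, Algebra.algebraMap_eq_smul_one, Matrix.smul_mulVec, Matrix.one_mulVec,
    sub_eq_zero, eq_comm]

lemma NoImag.transpose {n : ℕ} {M : Matrix (Fin n) (Fin n) ℝ} (h : NoImag M) : NoImag Mᵀ := by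
  intro μ z hz hM
  have h1 := (det_iff (cpx Mᵀ) μ).2 ⟨z, hz, hM⟩
  rw [cpx_transpose', ← Matrix.det_transpose] at h1
  have h2 : (algebraMap ℂ (Matrix (Fin n) (Fin n) ℂ) μ - (cpx M)ᵀ)ᵀ
      = algebraMap ℂ _ μ - cpx M := by
    rw [Matrix.transpose_sub, Matrix.transpose_transpose, Algebra.algebraMap_eq_smul_one,
      Matrix.transpose_smul, Matrix.transpose_one]
  rw [h2] at h1
  obtain ⟨w, hw, hw2⟩ := (det_iff _ _).1 h1
  exact h μ w hw hw2

lemma noImag_of_hurwitz_inv {n : ℕ} {M N : Matrix (Fin n) (Fin n) ℝ} (h : IsHurwitz N)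
    (hNM : N * M = 1) : NoImag M := by
  intro μ z hz hM hre
  have h1 : cpx (N * M) *ᵥ z = μ • (cpx N *ᵥ z) := by
    rw [cpx_mul, ← Matrix.mulVec_mulVec, hM, Matrix.mulVec_smul]
  rw [hNM, cpx_one, Matrix.one_mulVec] at h1
  have hμ : μ ≠ 0 := by
    rintro rfl
    exact hz (by simpa using h1)
  have h2 : cpx N *ᵥ z = μ⁻¹ • z := by
    conv_rhs => rw [h1]
    rw [smul_smul, inv_mul_cancel₀ hμ, one_smul]
  have h3 := h μ⁻¹ ((mem_spec_iff _ _).2 ((det_iff _ _).2 ⟨z, hz, h2⟩))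
  rw [Complex.inv_re, hre] at h3
  simp at h3

lemma quad_eq {n : ℕ} {M X W : Matrix (Fin n) (Fin n) ℝ}
    (hX : X * M + Mᵀ * X = -W) (z : Fin n → ℂ) :
    cpx X *ᵥ (cpx M *ᵥ z) + (cpx M)ᴴ *ᵥ (cpx X *ᵥ z) = -(cpx W *ᵥ z) := by
  have := congrArg (fun Y => cpx Y *ᵥ z) hX
  simpa [cpx_add, cpx_mul, cpx_neg, cpx_transpose, Matrix.add_mulVec, Matrix.neg_mulVec,
    Matrix.mulVec_mulVec] using this

lemma dot_adj {n m : ℕ} (M : Matrix (Fin n) (Fin m) ℂ) (x : Fin m → ℂ) (y : Fin n → ℂ) :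
    star x ⬝ᵥ (Mᴴ *ᵥ y) = star (M *ᵥ x) ⬝ᵥ y := by
  rw [Matrix.star_mulVec, Matrix.dotProduct_mulVec]

lemma eig_quad {n : ℕ} {M X W : Matrix (Fin n) (Fin n) ℝ}
    (hX : X * M + Mᵀ * X = -W) {z : Fin n → ℂ} {μ : ℂ} (hz : cpx M *ᵥ z = μ • z) :
    (μ + star μ) * (star z ⬝ᵥ (cpx X *ᵥ z)) = - (star z ⬝ᵥ (cpx W *ᵥ z)) := by
  have h := congrArg (fun y => star z ⬝ᵥ y) (quad_eq hX z)
  simp only [dotProduct_add, dotProduct_neg, dot_adj, hz, star_smul, smul_dotProduct,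
    Matrix.mulVec_smul, dotProduct_smul, smul_eq_mul] at h
  linear_combination h

lemma eig_re_zero {n : ℕ} {M P W : Matrix (Fin n) (Fin n) ℝ} (hW : W.PosSemidef)
    (hX : P * M + Mᵀ * P = -W) {z : Fin n → ℂ} {μ : ℂ} (hz : cpx M *ᵥ z = μ • z)
    (hμ : μ.re = 0) : cpx W *ᵥ z = 0 := by
  rw [← (cpx_psd hW).dotProduct_mulVec_zero_iff]
  have h := eig_quad hX hz
  have : μ + star μ = 0 := by
    apply Complex.ext <;> simp [hμ]
  rw [this, zero_mul] at h
  exact neg_eq_zero.1 h.symm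

lemma eig_re_zero' {n : ℕ} {M P W : Matrix (Fin n) (Fin n) ℝ} (hP : P.PosDef)
    (hX : P * M + Mᵀ * P = -W) {z : Fin n → ℂ} (hz0 : z ≠ 0) {μ : ℂ} (hz : cpx M *ᵥ z = μ • z)
    (hW : cpx W *ᵥ z = 0) : μ.re = 0 := by
  have h := eig_quad hX hz
  rw [hW, dotProduct_zero, neg_zero, mul_eq_zero, (cpx_psd hP.posSemidef).dotProduct_mulVec_zero_iff] at h
  rcases h with h | h
  · have := congrArg Complex.re h
    simp at this
    linarith
  · exact absurd (cpx_inj hP h) hz0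

lemma psd_add_ker {n : ℕ} {V W : Matrix (Fin n) (Fin n) ℝ} (hV : V.PosSemidef) (hW : W.PosSemidef)
    {z : Fin n → ℂ} (h : cpx (V + W) *ᵥ z = 0) : cpx V *ᵥ z = 0 ∧ cpx W *ᵥ z = 0 := by
  rw [← (cpx_psd hV).dotProduct_mulVec_zero_iff, ← (cpx_psd hW).dotProduct_mulVec_zero_iff]
  have h1 := (cpx_psd hV).dotProduct_mulVec_nonneg z
  have h2 := (cpx_psd hW).dotProduct_mulVec_nonneg z
  have h3 : star z ⬝ᵥ (cpx (V + W) *ᵥ z) = 0 := by rw [h, dotProduct_zero]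
  rw [cpx_add, Matrix.add_mulVec, dotProduct_add] at h3
  exact (add_eq_zero_iff_of_nonneg h1 h2).1 h3

lemma sandwich_psd {n m : ℕ} {R : Matrix (Fin m) (Fin m) ℝ} (hR : R.PosDef)
    (D : Matrix (Fin m) (Fin n) ℝ) : (Dᵀ * R * D).PosSemidef := by
  have := hR.posSemidef.conjTranspose_mul_mul_same D
  simpa using this

lemma sandwich_ker {n m : ℕ} {R : Matrix (Fin m) (Fin m) ℝ} (hR : R.PosDef)
    (D : Matrix (Fin m) (Fin n) ℝ) {z : Fin n → ℂ} (h : cpx (Dᵀ * R * D) *ᵥ z = 0) :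
    cpx D *ᵥ z = 0 := by
  apply cpx_inj hR
  rw [← (cpx_psd hR.posSemidef).dotProduct_mulVec_zero_iff, ← dot_adj]
  rw [cpx_mul, cpx_mul, cpx_transpose, ← Matrix.mulVec_mulVec, ← Matrix.mulVec_mulVec] at h
  rw [h, dotProduct_zero]

lemma not_psd_shift {n : ℕ} {P X : Matrix (Fin n) (Fin n) ℝ} (hP : P.PosDef) (hX : Xᵀ = X)
    (hn : ¬ X.PosSemidef) : ∃ t : ℝ, 0 < t ∧ (X + t • P).PosSemidef ∧
      ∃ v : Fin n → ℝ, v ≠ 0 ∧ (X + t • P) *ᵥ v = 0 := by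
  have hXh : X.IsHermitian := by simpa [Matrix.IsHermitian] using hX
  have hex : ∃ x : Fin n → ℝ, x ⬝ᵥ (X *ᵥ x) < 0 := by
    by_contra! hc
    exact hn (Matrix.PosSemidef.of_dotProduct_mulVec_nonneg hXh (fun x => by simpa using hc x))
  obtain ⟨x, hx⟩ := hex
  have hx0 : x ≠ 0 := by
    rintro rfl
    simp at hx
  have hPpos : ∀ y : Fin n → ℝ, y ≠ 0 → 0 < y ⬝ᵥ (P *ᵥ y) := fun y hy => by
    simpa using hP.dotProduct_mulVec_pos hy
  let f : (Fin n → ℝ) → ℝ := fun y => (y ⬝ᵥ (X *ᵥ y)) / (y ⬝ᵥ (P *ᵥ y))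
  have hfs : ∀ (c : ℝ) (y : Fin n → ℝ), c ≠ 0 → f (c • y) = f y := by
    intro c y hc
    simp only [f, Matrix.mulVec_smul, smul_dotProduct, dotProduct_smul, smul_eq_mul]
    rw [mul_div_mul_left _ _ hc, mul_div_mul_left _ _ hc]
  have hns : ∀ y : Fin n → ℝ, y ≠ 0 → ‖y‖⁻¹ • y ∈ Metric.sphere (0 : Fin n → ℝ) 1 := by
    intro y hy
    simp [norm_smul, hy]
  have hcont : ContinuousOn f (Metric.sphere (0 : Fin n → ℝ) 1) := by
    apply ContinuousOn.div
    · exact Continuous.continuousOn (by fun_prop)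
    · exact Continuous.continuousOn (by fun_prop)
    · intro y hy
      have : y ≠ 0 := by
        rintro rfl
        simp at hy
      exact (hPpos y this).ne'
  obtain ⟨v, hv, hmin⟩ := (isCompact_sphere (0 : Fin n → ℝ) 1).exists_isMinOn
    ⟨_, hns x hx0⟩ hcont
  have hv0 : v ≠ 0 := by
    rintro rfl
    simp at hv
  have hle : ∀ y, y ≠ 0 → f v ≤ f y := by
    intro y hy
    have := hmin (hns y hy)
    rw [← hfs ‖y‖⁻¹ y (by simpa using hy)]
    exact this
  have hquad : ∀ y : Fin n → ℝ, y ⬝ᵥ ((X + (-f v) • P) *ᵥ y)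
      = y ⬝ᵥ (X *ᵥ y) - f v * (y ⬝ᵥ (P *ᵥ y)) := by
    intro y
    rw [Matrix.add_mulVec, Matrix.smul_mulVec, dotProduct_add, dotProduct_smul, smul_eq_mul]
    ring
  have hpsd : (X + (-f v) • P).PosSemidef := by
    apply Matrix.PosSemidef.of_dotProduct_mulVec_nonneg
    · have h2 : Pᵀ = P := trans_of_psd hP.posSemidef
      simp [Matrix.IsHermitian, hX, h2]
    · intro y
      by_cases hy : y = 0
      · simp [hy]
      · have := hle y hy
        have h3 : f v * (y ⬝ᵥ (P *ᵥ y)) ≤ y ⬝ᵥ (X *ᵥ y) := (le_div_iff₀ (hPpos y hy)).1 this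
        have h4 := hquad y
        simp only [star_trivial]
        linarith
  refine ⟨-f v, ?_, hpsd, v, hv0, ?_⟩
  · have h1 := hle x hx0
    have h2 : f x < 0 := div_neg_of_neg_of_pos hx (hPpos x hx0)
    linarith
  · rw [← hpsd.dotProduct_mulVec_zero_iff]
    have h4 := hquad v
    have h5 : f v * (v ⬝ᵥ (P *ᵥ v)) = v ⬝ᵥ (X *ᵥ v) := div_mul_cancel₀ _ (hPpos v hv0).ne'
    simp only [star_trivial]
    linarith

lemma lyap_psd {n : ℕ} {M P X W₀ W : Matrix (Fin n) (Fin n) ℝ} (hM : NoImag M) (hP : P.PosDef)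
    (hW₀ : W₀.PosSemidef) (hW : W.PosSemidef) (hPM : P * M + Mᵀ * P = -W₀) (hX : Xᵀ = X)
    (hXM : X * M + Mᵀ * X = -W) : X.PosSemidef := by
  by_contra hn
  obtain ⟨t, ht, hY, v, hv0, hv⟩ := not_psd_shift hP hX hn
  set Y := X + t • P with hYdef
  have htW : (t • W₀).PosSemidef := hW₀.smul ht.le
  have hYM : Y * M + Mᵀ * Y = -(W + t • W₀) := by
    have : Y * M + Mᵀ * Y = (X * M + Mᵀ * X) + t • (P * M + Mᵀ * P) := by
      simp only [hYdef, add_mul, mul_add, smul_add, Matrix.smul_mul, Matrix.mul_smul]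
      abel
    rw [this, hXM, hPM, smul_neg, neg_add]
  have hker : ∀ z : Fin n → ℂ, cpx Y *ᵥ z = 0 →
      cpx (W + t • W₀) *ᵥ z = 0 ∧ cpx Y *ᵥ (cpx M *ᵥ z) = 0 := by
    intro z hz
    have h := quad_eq hYM z
    have hYh : (cpx Y)ᴴ = cpx Y := (cpx_psd hY).1
    have h0 : cpx (W + t • W₀) *ᵥ z = 0 := by
      rw [← (cpx_psd (hW.add htW)).dotProduct_mulVec_zero_iff]
      have h' := congrArg (fun y => star z ⬝ᵥ y) h
      simp only [dotProduct_add, dotProduct_neg, dot_adj, hz, dotProduct_zero, add_zero] at h'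
      rw [← hYh, dot_adj, hz, star_zero, zero_dotProduct] at h'
      exact neg_eq_zero.1 h'.symm
    refine ⟨h0, ?_⟩
    rw [hz, h0, Matrix.mulVec_zero, add_zero, neg_zero] at h
    exact h
  let S : Submodule ℂ (Fin n → ℂ) := LinearMap.ker (Matrix.mulVecLin (cpx Y))
  have hS : ∀ z, z ∈ S ↔ cpx Y *ᵥ z = 0 := by
    intro z
    simp [S]
  have hvS : (fun i => (v i : ℂ)) ∈ S := by
    rw [hS]
    ext i
    have := congrFun hv i
    simp only [Matrix.mulVec, dotProduct, cpx, Matrix.map_apply, Pi.zero_apply] at this ⊢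
    exact_mod_cast this
  have : Nontrivial S := by
    refine ⟨⟨⟨_, hvS⟩, 0, ?_⟩⟩
    intro h
    apply hv0
    ext i
    have := congrFun (congrArg Subtype.val h) i
    simpa using this
  have hinv : ∀ z ∈ S, Matrix.mulVecLin (cpx M) z ∈ S := by
    intro z hz
    rw [hS] at hz ⊢
    exact (hker z hz).2
  obtain ⟨μ, hμ⟩ := Module.End.exists_eigenvalue ((Matrix.mulVecLin (cpx M)).restrict hinv)
  obtain ⟨z, hz⟩ := hμ.exists_hasEigenvector
  have hz0 : (z : Fin n → ℂ) ≠ 0 := fun h => hz.2 (Subtype.ext h)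
  have hz1 : cpx M *ᵥ (z : Fin n → ℂ) = μ • (z : Fin n → ℂ) :=
    congrArg Subtype.val hz.apply_eq_smul
  have h0 := (psd_add_ker hW htW (hker z ((hS _).1 z.2)).1).2
  have h1 : cpx W₀ *ᵥ (z : Fin n → ℂ) = 0 := by
    have h2 : cpx (t • W₀) = (t : ℂ) • cpx W₀ := by
      ext i j; simp [cpx]
    rw [h2, Matrix.smul_mulVec] at h0
    exact (smul_eq_zero.1 h0).resolve_left (by exact_mod_cast ht.ne')
  exact hM μ z hz0 hz1 (eig_re_zero' hP hPM hz0 hz1 h1)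

/-- Policy evaluation residual. -/
noncomputable def Res {n m : ℕ} (A : Matrix (Fin n) (Fin n) ℝ) (B : Matrix (Fin n) (Fin m) ℝ)
    (Q : Matrix (Fin n) (Fin n) ℝ) (R : Matrix (Fin m) (Fin m) ℝ)
    (K : Matrix (Fin m) (Fin n) ℝ) (P : Matrix (Fin n) (Fin n) ℝ) : Matrix (Fin n) (Fin n) ℝ :=
  P * (A⁻¹ * (1 + B * K)) + (A⁻¹ * (1 + B * K))ᵀ * P + Q + Kᵀ * R * K

section
variable {n m : ℕ} {A : Matrix (Fin n) (Fin n) ℝ} {B : Matrix (Fin n) (Fin m) ℝ}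
    {Q : Matrix (Fin n) (Fin n) ℝ} {R : Matrix (Fin m) (Fin m) ℝ}

lemma gain_eq (hR : R.PosDef) (P : Matrix (Fin n) (Fin n) ℝ) :
    (A⁻¹ * B)ᵀ * P = -(R * ImprovedGain A B R P) := by
  have h1 : R * R⁻¹ = 1 := Matrix.mul_nonsing_inv _ ((Matrix.isUnit_iff_isUnit_det _).1 hR.isUnit)
  rw [ImprovedGain, Matrix.mul_neg, neg_neg, ← Matrix.mul_assoc, ← Matrix.mul_assoc,
    ← Matrix.mul_assoc, h1, Matrix.one_mul, Matrix.transpose_mul]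

lemma gain_eq' (hR : R.PosDef) {P : Matrix (Fin n) (Fin n) ℝ} (hP : Pᵀ = P) :
    P * (A⁻¹ * B) = -((ImprovedGain A B R P)ᵀ * R) := by
  have := congrArg Matrix.transpose (gain_eq (A := A) (B := B) hR P)
  rw [Matrix.transpose_mul, Matrix.transpose_transpose, hP, Matrix.transpose_neg,
    Matrix.transpose_mul, trans_of_psd hR.posSemidef] at this
  exact this

lemma res_eq (hR : R.PosDef) {P : Matrix (Fin n) (Fin n) ℝ} (hP : Pᵀ = P)
    (K : Matrix (Fin m) (Fin n) ℝ) :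
    Res A B Q R K P = Res A B Q R (ImprovedGain A B R P) P +
      (K - ImprovedGain A B R P)ᵀ * R * (K - ImprovedGain A B R P) := by
  have h1 := gain_eq (A := A) (B := B) hR P
  have h2 := gain_eq' (A := A) (B := B) hR hP
  set L := ImprovedGain A B R P
  have e : ∀ K : Matrix (Fin m) (Fin n) ℝ, Res A B Q R K P =
      P * A⁻¹ + (A⁻¹)ᵀ * P - Lᵀ * R * K - Kᵀ * R * L + Q + Kᵀ * R * K := by
    intro K
    have a1 : P * (A⁻¹ * (1 + B * K)) = P * A⁻¹ - Lᵀ * R * K := by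
      rw [Matrix.mul_add, Matrix.mul_one, Matrix.mul_add, ← Matrix.mul_assoc A⁻¹,
        ← Matrix.mul_assoc P, h2, Matrix.neg_mul, sub_eq_add_neg]
    have a2 : (A⁻¹ * (1 + B * K))ᵀ * P = (A⁻¹)ᵀ * P - Kᵀ * R * L := by
      rw [Matrix.mul_add, Matrix.mul_one, ← Matrix.mul_assoc A⁻¹, Matrix.transpose_add,
        Matrix.transpose_mul _ K, Matrix.add_mul, Matrix.mul_assoc, h1, Matrix.mul_neg,
        ← Matrix.mul_assoc, sub_eq_add_neg]
    rw [Res, a1, a2]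
    abel
  rw [e K, e L]
  simp only [Matrix.transpose_sub, Matrix.sub_mul, Matrix.mul_sub]
  abel

lemma res_are (hR : R.PosDef) {P : Matrix (Fin n) (Fin n) ℝ} (hP : Pᵀ = P)
    (h : SolvesARE A B Q R P) : Res A B Q R (ImprovedGain A B R P) P = 0 := by
  have h1 := gain_eq (A := A) (B := B) hR P
  have h2 := gain_eq' (A := A) (B := B) hR hP
  have h3 : P * A⁻¹ * B * R⁻¹ * Bᵀ * (A⁻¹)ᵀ * P = P * (A⁻¹ * B) * -ImprovedGain A B R P := by
    simp only [ImprovedGain, neg_neg, Matrix.mul_assoc]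
  rw [SolvesARE, h3, h2] at h
  set L := ImprovedGain A B R P
  have a1 : P * (A⁻¹ * (1 + B * L)) = P * A⁻¹ - Lᵀ * R * L := by
    rw [Matrix.mul_add, Matrix.mul_one, Matrix.mul_add, ← Matrix.mul_assoc A⁻¹,
      ← Matrix.mul_assoc P, h2, Matrix.neg_mul, sub_eq_add_neg]
  have a2 : (A⁻¹ * (1 + B * L))ᵀ * P = (A⁻¹)ᵀ * P - Lᵀ * R * L := by
    rw [Matrix.mul_add, Matrix.mul_one, ← Matrix.mul_assoc A⁻¹, Matrix.transpose_add,
      Matrix.transpose_mul _ L, Matrix.add_mul, Matrix.mul_assoc, h1, Matrix.mul_neg,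
      ← Matrix.mul_assoc, sub_eq_add_neg]
  rw [Res, a1, a2, ← h]
  simp only [Matrix.neg_mul, Matrix.mul_neg, neg_neg]
  abel

lemma res_lyap {K : Matrix (Fin m) (Fin n) ℝ} {P W : Matrix (Fin n) (Fin n) ℝ}
    (h : Res A B Q R K P + W = 0) :
    P * (A⁻¹ * (1 + B * K)) + (A⁻¹ * (1 + B * K))ᵀ * P = -((Q + Kᵀ * R * K) + W) := by
  rw [← sub_eq_zero, ← h, Res]
  abel

lemma res_sub {K : Matrix (Fin m) (Fin n) ℝ} {P P' W : Matrix (Fin n) (Fin n) ℝ}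
    (h : Res A B Q R K P - Res A B Q R K P' = -W) :
    (P - P') * (A⁻¹ * (1 + B * K)) + (A⁻¹ * (1 + B * K))ᵀ * (P - P') = -W := by
  rw [← h, Res, Res, Matrix.sub_mul, Matrix.mul_sub]
  abel

lemma closed_loop_ker {K L : Matrix (Fin m) (Fin n) ℝ} {z : Fin n → ℂ}
    (h : cpx (K - L) *ᵥ z = 0) :
    cpx (A⁻¹ * (1 + B * K)) *ᵥ z = cpx (A⁻¹ * (1 + B * L)) *ᵥ z := by
  have e : A⁻¹ * (1 + B * K) = A⁻¹ * (1 + B * L) + A⁻¹ * B * (K - L) := by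
    simp only [Matrix.mul_add, Matrix.mul_sub, Matrix.mul_assoc]
    abel
  rw [e, cpx_add, cpx_mul _ (K - L), Matrix.add_mulVec, ← Matrix.mulVec_mulVec, h,
    Matrix.mulVec_zero, add_zero]

lemma noImag_step (hQ : Q.PosSemidef) (hR : R.PosDef) {P : Matrix (Fin n) (Fin n) ℝ}
    (hP : P.PosDef) {K : Matrix (Fin m) (Fin n) ℝ} (hK : Res A B Q R K P = 0)
    (hM : NoImag (A⁻¹ * (1 + B * K))) : NoImag (A⁻¹ * (1 + B * ImprovedGain A B R P)) := by
  intro μ z hz hz1 hre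
  have h := res_eq (A := A) (B := B) (Q := Q) hR (trans_of_psd hP.posSemidef) K
  rw [hK] at h
  have h0 := res_lyap h.symm
  have hp1 := hQ.add (sandwich_psd hR (ImprovedGain A B R P))
  have hp2 := sandwich_psd hR (K - ImprovedGain A B R P)
  have h2 := sandwich_ker hR _ (psd_add_ker hp1 hp2 (eig_re_zero (hp1.add hp2) h0 hz1 hre)).2
  exact hM μ z hz ((closed_loop_ker h2).trans hz1) hre

lemma noImag_star (hQ : Q.PosSemidef) (hR : R.PosDef) {P : Matrix (Fin n) (Fin n) ℝ}
    (hP : P.PosDef) {K : Matrix (Fin m) (Fin n) ℝ}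
    (hP0 : Res A B Q R (ImprovedGain A B R P) P = 0)
    (hM : NoImag (A⁻¹ * (1 + B * K))) : NoImag (A⁻¹ * (1 + B * ImprovedGain A B R P)) := by
  intro μ z hz hz1 hre
  have h0 := res_lyap (W := 0) (by rw [hP0, add_zero])
  rw [add_zero] at h0
  have hp1 := sandwich_psd hR (ImprovedGain A B R P)
  have hW := eig_re_zero (hQ.add hp1) h0 hz1 hre
  have h2 := sandwich_ker hR _ (psd_add_ker hQ hp1 hW).2
  have h3 := quad_eq h0 z
  have h4 := congrArg (fun Y => cpx Y *ᵥ z) (gain_eq (A := A) (B := B) hR P)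
  simp only [cpx_neg, cpx_mul _ (ImprovedGain A B R P), cpx_mul _ P, ← Matrix.mulVec_mulVec,
    Matrix.neg_mulVec, h2, Matrix.mulVec_zero, neg_zero] at h4
  set w := cpx P *ᵥ z with hw
  have hw0 : w ≠ 0 := fun h => hz (cpx_inj hP h)
  rw [hW, hz1, Matrix.mulVec_smul, ← hw, neg_zero, ← cpx_transpose] at h3
  refine hM.transpose (-μ) w hw0 ?_ (by simp [hre])
  have e : (A⁻¹ * (1 + B * K))ᵀ = (A⁻¹ * (1 + B * ImprovedGain A B R P))ᵀ
      + (K - ImprovedGain A B R P)ᵀ * (A⁻¹ * B)ᵀ := by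
    rw [← Matrix.transpose_mul, ← Matrix.transpose_add]
    congr 1
    simp only [Matrix.mul_add, Matrix.mul_sub, Matrix.mul_assoc]
    abel
  rw [e, cpx_add, Matrix.add_mulVec, cpx_mul, ← Matrix.mulVec_mulVec, h4, Matrix.mulVec_zero,
    add_zero, neg_smul]
  exact eq_neg_of_add_eq_zero_right h3
end

lemma psd_mono_tendsto {n : ℕ} (P : ℕ → Matrix (Fin n) (Fin n) ℝ)
    (hP : ∀ i, (P i).PosSemidef) (hd : ∀ i, (P i - P (i + 1)).PosSemidef) :
    ∃ L, Tendsto P atTop (𝓝 L) := by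
  have hq : ∀ x : Fin n → ℝ, ∃ l, Tendsto (fun i => x ⬝ᵥ (P i *ᵥ x)) atTop (𝓝 l) := by
    intro x
    refine ⟨_, tendsto_atTop_ciInf (antitone_nat_of_succ_le ?_) ⟨0, ?_⟩⟩
    · intro i
      have := (hd i).dotProduct_mulVec_nonneg x
      rw [Matrix.sub_mulVec, dotProduct_sub] at this
      simpa using this
    · rintro _ ⟨i, rfl⟩
      simpa using (hP i).dotProduct_mulVec_nonneg x
  choose q hq using hq
  let e : Fin n → (Fin n → ℝ) := fun a => Pi.single a 1
  refine ⟨fun a b => (q (e a + e b) - q (e a) - q (e b)) / 2, ?_⟩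
  refine tendsto_pi_nhds.2 fun a => tendsto_pi_nhds.2 fun b => ?_
  have := (((hq (e a + e b)).sub (hq (e a))).sub (hq (e b))).div_const 2
  refine this.congr fun i => ?_
  have hs : P i b a = P i a b := by
    conv_lhs => rw [← trans_of_psd (hP i)]
    rfl
  simp [e, Matrix.mulVec_add, dotProduct_add, add_dotProduct, hs]
  ring

end Helpers

theorem policy_iteration_converges {n m : ℕ} (hn : 0 < n) (hm : 0 < m)
    (A : Matrix (Fin n) (Fin n) ℝ) (B : Matrix (Fin n) (Fin m) ℝ)
    (Q : Matrix (Fin n) (Fin n) ℝ) (R : Matrix (Fin m) (Fin m) ℝ)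
    (hA : IsUnit A) (hQ : Q.PosSemidef) (hR : R.PosDef)
    (Pstar : Matrix (Fin n) (Fin n) ℝ)
    (hPstar : Pstar.PosDef) (hARE : SolvesARE A B Q R Pstar)
    (P : ℕ → Matrix (Fin n) (Fin n) ℝ) (K : ℕ → Matrix (Fin m) (Fin n) ℝ)
    (hK1 : IsStabilizing A B (K 1))
    (hPi : ∀ i, 1 ≤ i → (P i).PosDef ∧ PolicyEval A B Q R (K i) (P i))
    (hKrec : ∀ i, 1 ≤ i → K (i + 1) = ImprovedGain A B R (P i)) :
    Tendsto P atTop (𝓝 Pstar) ∧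
    Tendsto K atTop (𝓝 (ImprovedGain A B R Pstar)) := by
  have hPd : ∀ i, 1 ≤ i → (P i).PosDef := fun i hi => (hPi i hi).1
  have hPs : ∀ i, 1 ≤ i → (P i)ᵀ = P i := fun i hi => trans_of_psd (hPd i hi).posSemidef
  have hPe : ∀ i, 1 ≤ i → Res A B Q R (K i) (P i) = 0 := fun i hi => (hPi i hi).2
  have hSs : Pstarᵀ = Pstar := trans_of_psd hPstar.posSemidef
  have hS0 := res_are hR hSs hARE
  have hM1 : NoImag (A⁻¹ * (1 + B * K 1)) := by
    refine noImag_of_hurwitz_inv hK1.2 ?_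
    have h1 : A * A⁻¹ = 1 := Matrix.mul_nonsing_inv _ ((Matrix.isUnit_iff_isUnit_det _).1 hA)
    have h2 := Matrix.nonsing_inv_mul _ ((Matrix.isUnit_iff_isUnit_det _).1 hK1.1)
    rw [Matrix.mul_assoc, ← Matrix.mul_assoc A, h1, Matrix.one_mul, h2]
  have hM : ∀ i, 1 ≤ i → NoImag (A⁻¹ * (1 + B * K i)) := by
    intro i hi
    induction i, hi using Nat.le_induction with
    | base => exact hM1
    | succ i hi ih =>
      rw [hKrec i hi]
      exact noImag_step hQ hR (hPd i hi) (hPe i hi) ih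
  have hMs := noImag_star hQ hR hPstar hS0 hM1
  have hW : ∀ L : Matrix (Fin m) (Fin n) ℝ, (Q + Lᵀ * R * L).PosSemidef :=
    fun L => hQ.add (sandwich_psd hR L)
  have hlyap : ∀ (L : Matrix (Fin m) (Fin n) ℝ) (X : Matrix (Fin n) (Fin n) ℝ),
      Res A B Q R L X = 0 →
      X * (A⁻¹ * (1 + B * L)) + (A⁻¹ * (1 + B * L))ᵀ * X = -(Q + Lᵀ * R * L) := by
    intro L X h
    have := res_lyap (W := 0) (by rw [h, add_zero])
    rwa [add_zero] at this
  have hdec : ∀ i, 1 ≤ i → (P i - P (i + 1)).PosSemidef := by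
    intro i hi
    have hi' : 1 ≤ i + 1 := by omega
    have h := res_eq (A := A) (B := B) (Q := Q) hR (hPs i hi) (K i)
    rw [hPe i hi, ← hKrec i hi] at h
    refine lyap_psd (hM _ hi') (hPd _ hi') (hW _) (sandwich_psd hR (K i - K (i + 1)))
      (hlyap _ _ (hPe _ hi')) ?_ (res_sub (Q := Q) (R := R) ?_)
    · rw [Matrix.transpose_sub, hPs i hi, hPs _ hi']
    · rw [hPe _ hi', sub_zero]
      exact eq_neg_of_add_eq_zero_left h.symm
  have hge : ∀ i, 1 ≤ i → (P i - Pstar).PosSemidef := by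
    intro i hi
    have h := res_eq (A := A) (B := B) (Q := Q) hR hSs (K i)
    rw [hS0, zero_add] at h
    refine lyap_psd (hM _ hi) (hPd _ hi) (hW _)
      (sandwich_psd hR (K i - ImprovedGain A B R Pstar)) (hlyap _ _ (hPe _ hi)) ?_ (res_sub (Q := Q) (R := R) ?_)
    · rw [Matrix.transpose_sub, hPs i hi, hSs]
    · rw [hPe _ hi, h, zero_sub]
  obtain ⟨L, hL⟩ := psd_mono_tendsto (fun i => P (i + 1)) (fun i => (hPd _ (by omega)).posSemidef)
    (fun i => hdec _ (by omega))
  have hgc : Continuous (fun X : Matrix (Fin n) (Fin n) ℝ => ImprovedGain A B R X) := by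
    unfold ImprovedGain
    fun_prop
  have hK2 : Tendsto (fun i => K (i + 2)) atTop (𝓝 (ImprovedGain A B R L)) := by
    refine ((hgc.tendsto L).comp hL).congr fun i => ?_
    exact (hKrec (i + 1) (by omega)).symm
  have hL2 : Tendsto (fun i => P (i + 2)) atTop (𝓝 L) :=
    hL.comp (tendsto_add_atTop_nat 1)
  have hLs : Lᵀ = L := by
    have hc : Continuous (fun X : Matrix (Fin n) (Fin n) ℝ => Xᵀ) := by fun_prop
    refine tendsto_nhds_unique (((hc.tendsto L).comp hL).congr fun i => ?_) hL
    exact hPs (i + 1) (by omega)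
  have hL0 : Res A B Q R (ImprovedGain A B R L) L = 0 := by
    have hc : Continuous (fun p : Matrix (Fin m) (Fin n) ℝ × Matrix (Fin n) (Fin n) ℝ =>
        Res A B Q R p.1 p.2) := by
      unfold Res
      fun_prop
    have h1 := (hc.tendsto (ImprovedGain A B R L, L)).comp (hK2.prodMk_nhds hL2)
    refine tendsto_nhds_unique h1 (tendsto_const_nhds.congr fun i => ?_)
    exact (hPe (i + 2) (by omega)).symm
  have hle : (Pstar - L).PosSemidef := by
    have h := res_eq (A := A) (B := B) (Q := Q) hR hLs (ImprovedGain A B R Pstar)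
    rw [hL0, zero_add] at h
    refine lyap_psd hMs hPstar (hW _)
      (sandwich_psd hR (ImprovedGain A B R Pstar - ImprovedGain A B R L)) (hlyap _ _ hS0) ?_
      (res_sub (Q := Q) (R := R) ?_)
    · rw [Matrix.transpose_sub, hLs, hSs]
    · rw [hS0, h, zero_sub]
  have hLe : L = Pstar := by
    have hz : ∀ x, (Pstar - L) *ᵥ x = 0 := by
      intro x
      rw [← hle.dotProduct_mulVec_zero_iff]
      apply le_antisymm _ (hle.dotProduct_mulVec_nonneg x)
      have hc : Continuous (fun X : Matrix (Fin n) (Fin n) ℝ => star x ⬝ᵥ ((Pstar - X) *ᵥ x)) := by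
        fun_prop
      refine le_of_tendsto ((hc.tendsto L).comp hL) (Eventually.of_forall fun i => ?_)
      have := (hge (i + 1) (by omega)).dotProduct_mulVec_nonneg x
      rw [← neg_sub, Matrix.neg_mulVec, dotProduct_neg] at this
      simpa using this
    have : Pstar - L = 0 := by
      ext i j
      have := congrFun (hz (Pi.single j 1)) i
      simpa using this
    exact (sub_eq_zero.1 this).symm
  subst hLe
  exact ⟨(tendsto_add_atTop_iff_nat 1).1 hL, (tendsto_add_atTop_iff_nat 2).1 hK2⟩
end

section
/- Let K be a stabilizing derivative-feedback gain and P a symmetric positive definite solution of the policy-evaluation equation for K. Let x : ℝ → ℝⁿ be differentiable with x'(t) = (I + B·K)⁻¹·A · x(t) for all t (the closed-loop trajectory). Then for every t the improper integral ∫ₜ^∞ x'(τ)ᵀ (Q + Kᵀ R K) x'(τ) dτ converges and equals x(t)ᵀ P x(t). -/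
open Matrix MeasureTheory Filter Topology

open Polynomial in
theorem decay_aux {n : ℕ} (M : Matrix (Fin n) (Fin n) ℂ) (s : Multiset ℂ) :
    (∀ μ ∈ s, μ.re < 0) → ∀ y : ℝ → Fin n → ℂ,
    (∀ t : ℝ, HasDerivAt y (M.mulVec (y t)) t) →
    (∀ t, (aeval M ((s.map (fun a => X - C a)).prod)).mulVec (y t) = 0) →
    ∃ ε > 0, ∃ D : ℝ, 0 ≤ D ∧ ∀ t ≥ 0, ‖y t‖ ≤ D * Real.exp (-ε * t) := by
  induction s using Multiset.induction with
  | empty =>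
    intro _ y _ h0
    refine ⟨1, one_pos, 0, le_rfl, fun t _ => ?_⟩
    have := h0 t
    simp at this
    simp [this]
  | cons l s ih =>
    intro hs y hy h0
    have hl : l.re < 0 := hs l (Multiset.mem_cons_self _ _)
    obtain ⟨ε₀, hε₀, D₀, hD₀, hz₀⟩ := ih (fun μ h => hs μ (Multiset.mem_cons_of_mem h))
      (fun t => M.mulVec (y t) - l • y t) (by
        intro t
        have h1 : HasDerivAt (fun t => M.mulVec (y t)) (M.mulVec (M.mulVec (y t))) t :=
          (LinearMap.toContinuousLinearMap (Matrix.toLin' M)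
            |>.restrictScalars ℝ).hasFDerivAt.comp_hasDerivAt t (hy t)
        have h2 := h1.sub ((hy t).const_smul l)
        rw [Matrix.mulVec_sub, Matrix.mulVec_smul]
        exact h2) (by
        intro t
        have := h0 t
        rw [Multiset.map_cons, Multiset.prod_cons, mul_comm, map_mul, ← Matrix.mulVec_mulVec] at this
        rw [← this]
        congr 1
        simp [Matrix.sub_mulVec, Algebra.algebraMap_eq_smul_one, Matrix.smul_mulVec])
    set ε := min ε₀ (-l.re / 2) with hε
    have hεpos : 0 < ε := lt_min hε₀ (by linarith)
    have hε1 : ε ≤ ε₀ := min_le_left _ _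
    have hε2 : ε ≤ -l.re / 2 := min_le_right _ _
    set d := -l.re - ε with hd
    have hdpos : 0 < d := by linarith
    have hz : ∀ t ≥ 0, ‖M.mulVec (y t) - l • y t‖ ≤ D₀ * Real.exp (-ε * t) := by
      intro t ht
      refine (hz₀ t ht).trans ?_
      gcongr
    have hg : ∀ t : ℝ, HasDerivAt (fun t : ℝ => Complex.exp (-l * t) • y t)
        (Complex.exp (-l * t) • (M.mulVec (y t) - l • y t)) t := by
      intro t
      have h1 : HasDerivAt (fun t : ℝ => Complex.exp (-l * t)) (Complex.exp (-l * t) * (-l)) t := by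
        have h3 : HasDerivAt (fun t : ℝ => -l * (t : ℂ)) (-l) t := by
          simpa using (Complex.ofRealCLM.hasDerivAt (x := t)).const_mul (-l)
        exact h3.cexp
      refine (h1.smul (hy t)).congr_deriv ?_
      rw [smul_sub, smul_smul, mul_neg, neg_smul, ← sub_eq_add_neg]
    have hne : ∀ t : ℝ, ‖Complex.exp (-l * t)‖ = Real.exp (-l.re * t) := by
      intro t
      rw [Complex.norm_exp]; simp
    refine ⟨ε, hεpos, ‖y 0‖ + D₀ / d, by positivity, fun t ht => ?_⟩
    have hB : ∀ t : ℝ, HasDerivAt (fun t : ℝ => ‖y 0‖ + D₀ / d * Real.exp (d * t))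
        (D₀ * Real.exp (d * t)) t := by
      intro t
      have h3 : HasDerivAt (fun t : ℝ => d * t) d t := by
        simpa using (hasDerivAt_id t).const_mul d
      refine ((h3.exp.const_mul (D₀ / d)).const_add ‖y 0‖).congr_deriv ?_
      field_simp
    have key := image_norm_le_of_norm_deriv_right_le_deriv_boundary
      (f := fun t : ℝ => Complex.exp (-l * t) • y t)
      (f' := fun t : ℝ => Complex.exp (-l * t) • (M.mulVec (y t) - l • y t))
      (a := 0) (b := t)
      (fun u _ => (hg u).continuousAt.continuousWithinAt)
      (fun u _ => (hg u).hasDerivWithinAt)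
      (B := fun t : ℝ => ‖y 0‖ + D₀ / d * Real.exp (d * t))
      (B' := fun t : ℝ => D₀ * Real.exp (d * t))
      (by simp; positivity) hB
      (by
        intro u hu
        rw [norm_smul, hne]
        calc _ ≤ Real.exp (-l.re * u) * (D₀ * Real.exp (-ε * u)) := by
              gcongr; exact hz u hu.1
          _ = D₀ * (Real.exp (-l.re * u) * Real.exp (-ε * u)) := by ring
          _ = _ := by rw [← Real.exp_add]; congr 2; rw [hd]; ring)
      (Set.right_mem_Icc.2 ht)
    simp only [norm_smul, hne] at key
    have h5 : ‖y 0‖ ≤ ‖y 0‖ * Real.exp (d * t) :=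
      le_mul_of_one_le_right (norm_nonneg _) (Real.one_le_exp (by positivity))
    have h6 : Real.exp (-l.re * t) * ‖y t‖ ≤ (‖y 0‖ + D₀ / d) * Real.exp (d * t) := by
      linarith
    have h7 : Real.exp (d * t) = Real.exp (-l.re * t) * Real.exp (-ε * t) := by
      rw [← Real.exp_add]; congr 1; rw [hd]; ring
    rw [h7] at h6
    have h8 := Real.exp_pos (-l.re * t)
    refine le_of_mul_le_mul_left ?_ h8
    linarith

theorem hurwitz_tendsto {n : ℕ} (M : Matrix (Fin n) (Fin n) ℝ) (hM : IsHurwitz M)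
    (x : ℝ → Fin n → ℝ) (hx : ∀ t : ℝ, HasDerivAt x (M.mulVec (x t)) t) :
    Tendsto x atTop (𝓝 0) := by
  set Mc := M.map Complex.ofReal with hMc
  have hsplit := (IsAlgClosed.splits Mc.charpoly).eq_prod_roots_of_monic Mc.charpoly_monic
  obtain ⟨ε, hε, D, hD, h⟩ := decay_aux Mc Mc.charpoly.roots (by
      intro μ hμ
      apply hM
      rw [Matrix.mem_spectrum_iff_isRoot_charpoly]
      exact Polynomial.isRoot_of_mem_roots hμ)
    (fun t i => (x t i : ℂ)) (by
      intro t
      rw [hasDerivAt_pi]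
      intro i
      have := ((hasDerivAt_pi.1 (hx t)) i).ofReal_comp
      refine this.congr_deriv ?_
      simp [hMc, Matrix.mulVec, dotProduct]) (by
      intro t
      rw [← hsplit, Matrix.aeval_self_charpoly, Matrix.zero_mulVec])
  rw [tendsto_zero_iff_norm_tendsto_zero]
  have hlim : Tendsto (fun t : ℝ => D * Real.exp (-ε * t)) atTop (𝓝 0) := by
    have : Tendsto (fun t : ℝ => Real.exp (-ε * t)) atTop (𝓝 0) :=
      Real.tendsto_exp_atBot.comp (tendsto_id.const_mul_atTop_of_neg (by linarith))
    simpa using this.const_mul D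
  refine squeeze_zero' (Eventually.of_forall fun t => norm_nonneg _) ?_ hlim
  filter_upwards [eventually_ge_atTop 0] with t ht
  refine le_trans ?_ (h t ht)
  rw [pi_norm_le_iff_of_nonneg (norm_nonneg _)]
  intro i
  have := norm_le_pi_norm (fun i => (x t i : ℂ)) i
  simpa using this

/-- Value-function representation: if `P > 0` solves the policy-evaluation
equation for a stabilizing gain `K` and `x` is the closed-loop trajectory,
`x' = (I + BK)⁻¹ A x`, then for every `t` the improper integral
`∫ₜ^∞ x'(τ)ᵀ (Q + Kᵀ R K) x'(τ) dτ` converges and equals `x(t)ᵀ P x(t)`. -/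
theorem value_function_integral {n m : ℕ} (hn : 0 < n) (hm : 0 < m)
    (A : Matrix (Fin n) (Fin n) ℝ) (B : Matrix (Fin n) (Fin m) ℝ)
    (Q : Matrix (Fin n) (Fin n) ℝ) (R : Matrix (Fin m) (Fin m) ℝ)
    (hA : IsUnit A) (hQ : Q.PosSemidef) (hR : R.PosDef)
    (K : Matrix (Fin m) (Fin n) ℝ) (P : Matrix (Fin n) (Fin n) ℝ)
    (hK : IsStabilizing A B K) (hP : P.PosDef)
    (hPE : PolicyEval A B Q R K P)
    (x : ℝ → Fin n → ℝ)
    (hx : ∀ t : ℝ, HasDerivAt x (((1 + B * K)⁻¹ * A).mulVec (x t)) t)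
    (t : ℝ) :
    IntegrableOn
      (fun τ => deriv x τ ⬝ᵥ (Q + Kᵀ * R * K).mulVec (deriv x τ)) (Set.Ioi t) ∧
    ∫ τ in Set.Ioi t, deriv x τ ⬝ᵥ (Q + Kᵀ * R * K).mulVec (deriv x τ) =
      x t ⬝ᵥ P.mulVec (x t) := by
  set M := (1 + B * K)⁻¹ * A with hM
  set N := A⁻¹ * (1 + B * K) with hN
  set S := Q + Kᵀ * R * K with hS
  have hNM : N * M = 1 := by
    have h1 := (Matrix.isUnit_iff_isUnit_det _).1 hK.1
    have h2 := (Matrix.isUnit_iff_isUnit_det _).1 hA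
    rw [hN, hM, Matrix.mul_assoc, Matrix.mul_nonsing_inv_cancel_left _ _ h1,
      Matrix.nonsing_inv_mul _ h2]
  have hder : ∀ τ, deriv x τ = M.mulVec (x τ) := fun τ => (hx τ).deriv
  have hlim := hurwitz_tendsto M hK.2 x hx
  have hSsd : S.PosSemidef := by
    refine hQ.add ?_
    have := hR.posSemidef.conjTranspose_mul_mul_same K
    simpa using this
  have hPS : P * N + Nᵀ * P = -S := by
    have : P * N + Nᵀ * P + Q + Kᵀ * R * K = 0 := hPE
    rw [hS, eq_neg_iff_add_eq_zero, ← add_assoc]; exact this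
  simp only [hder]
  have hcont : Continuous (fun v : Fin n → ℝ => v ⬝ᵥ P.mulVec v) := by fun_prop
  have hV : ∀ τ, HasDerivAt (fun τ => x τ ⬝ᵥ P.mulVec (x τ))
      (-(M.mulVec (x τ) ⬝ᵥ S.mulVec (M.mulVec (x τ)))) τ := by
    intro τ
    have h1 : HasDerivAt (fun t => P.mulVec (x t)) (P.mulVec (M.mulVec (x τ))) τ :=
      (LinearMap.toContinuousLinearMap (Matrix.toLin' P)).hasFDerivAt.comp_hasDerivAt τ (hx τ)
    have h2 : HasDerivAt (fun τ => x τ ⬝ᵥ P.mulVec (x τ))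
        (∑ i, (M.mulVec (x τ) i * P.mulVec (x τ) i + x τ i * P.mulVec (M.mulVec (x τ)) i)) τ :=
      HasDerivAt.fun_sum fun i _ => ((hasDerivAt_pi.1 (hx τ)) i).mul ((hasDerivAt_pi.1 h1) i)
    refine h2.congr_deriv (Eq.symm ?_)
    rw [Finset.sum_add_distrib]
    change _ = M.mulVec (x τ) ⬝ᵥ P.mulVec (x τ) + x τ ⬝ᵥ P.mulVec (M.mulVec (x τ))
    have hxN : x τ = N.mulVec (M.mulVec (x τ)) := by
      rw [Matrix.mulVec_mulVec, hNM, Matrix.one_mulVec]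
    generalize M.mulVec (x τ) = w at hxN
    rw [hxN, ← dotProduct_neg, ← Matrix.neg_mulVec, ← hPS, Matrix.add_mulVec, dotProduct_add]
    clear_value N
    congr 1
    · rw [← Matrix.mulVec_mulVec]
    · rw [← Matrix.mulVec_mulVec, Matrix.dotProduct_mulVec, Matrix.vecMul_transpose]
  have hV0 : Tendsto (fun τ => x τ ⬝ᵥ P.mulVec (x τ)) atTop (𝓝 0) := by
    have := (hcont.tendsto 0).comp hlim
    simpa [Function.comp_def] using this
  have hnn : ∀ τ ∈ Set.Ioi t, -(M.mulVec (x τ) ⬝ᵥ S.mulVec (M.mulVec (x τ))) ≤ 0 := by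
    intro τ _
    have := hSsd.dotProduct_mulVec_nonneg (M.mulVec (x τ))
    simp only [star_trivial] at this
    linarith
  have hint := integrableOn_Ioi_deriv_of_nonpos' (fun τ _ => hV τ) hnn hV0
  have hval := integral_Ioi_of_hasDerivAt_of_nonpos' (fun τ _ => hV τ) hnn hV0
  refine ⟨by simpa using hint.neg, ?_⟩
  rw [integral_neg] at hval
  linarith
end

section
/- Let P* be a symmetric positive definite solution of the derivative-feedback algebraic Riccati equation and suppose K* = −R⁻¹ Bᵀ A⁻ᵀ P* is a stabilizing derivative-feedback gain. Let x : ℝ → ℝⁿ be differentiable with x'(t) = (I + B·K*)⁻¹·A · x(t) for all t ≥ t₀ and x(t₀) = x₀, and let u(t) = −K* x'(t). Then the quadratic cost ∫_{t₀}^∞ ( x'(τ)ᵀ Q x'(τ) + u(τ)ᵀ R u(τ) ) dτ converges and equals x₀ᵀ P* x₀. -/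
open Matrix MeasureTheory Filter Topology

lemma aux_scalar {E : Type*} [NormedAddCommGroup E] [NormedSpace ℂ E] 
    (μ : ℂ) (hμ : μ.re < 0) (t₀ : ℝ) (f g : ℝ → E)
    (hf : ∀ t, t₀ ≤ t → HasDerivAt f (μ • f t + g t) t)
    (hg : Tendsto g atTop (𝓝 0)) : Tendsto f atTop (𝓝 0) := by
  rw [Metric.tendsto_atTop] at hg ⊢
  intro ε hε
  have ha : 0 < -μ.re := by linarith
  obtain ⟨T0, hT0⟩ := hg (ε / 2 * (-μ.re)) (by positivity)
  set T := max t₀ T0 with hT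
  let h : ℝ → E := fun t => Complex.exp (-μ * t) • f t
  have hexp : ∀ t : ℝ, HasDerivAt (fun t : ℝ => Complex.exp (-μ * t)) (Complex.exp (-μ * t) * (-μ)) t := by
    intro t
    have h1 : HasDerivAt (fun z : ℂ => Complex.exp (-μ * z)) (Complex.exp (-μ * t) * (-μ)) (t : ℂ) := by
      simpa using ((hasDerivAt_id (t : ℂ)).const_mul (-μ)).cexp
    exact h1.comp_ofReal
  have hnorm : ∀ t : ℝ, ‖Complex.exp (-μ * t)‖ = Real.exp (-μ.re * t) := by
    intro t; rw [Complex.norm_exp]; simp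
  have hh : ∀ t, t₀ ≤ t → HasDerivAt h (Complex.exp (-μ * t) • g t) t := by
    intro t ht
    have := (hexp t).smul (hf t ht)
    have e : Complex.exp (-μ * t) • g t = Complex.exp (-μ * t) • (μ • f t + g t) + (Complex.exp (-μ * t) * -μ) • f t := by
      rw [smul_add, smul_smul, mul_neg, neg_smul]; abel
    rw [e]
    exact this
  have hbound : ∀ t, T ≤ t → ‖h t‖ ≤ ‖h T‖ + ε / 2 * (Real.exp (-μ.re * t) - Real.exp (-μ.re * T)) := by
    intro t ht
    have hBd : ∀ s : ℝ, HasDerivAt (fun s => ‖h T‖ + ε / 2 * (Real.exp (-μ.re * s) - Real.exp (-μ.re * T)))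
        (ε / 2 * (Real.exp (-μ.re * s) * (-μ.re))) s := by
      intro s
      have h1 : HasDerivAt (fun s : ℝ => Real.exp (-μ.re * s)) (Real.exp (-μ.re * s) * (-μ.re)) s := by
        simpa using ((hasDerivAt_id s).const_mul (-μ.re)).exp
      exact ((h1.sub_const _).const_mul _).const_add _
    refine image_norm_le_of_norm_deriv_right_le_deriv_boundary (a := T) (b := t)
      (f' := fun t => Complex.exp (-μ * t) • g t) ?_ ?_ ?_ hBd ?_ (Set.right_mem_Icc.2 ht)
    · intro s hs
      exact (hh s ((le_max_left _ _).trans hs.1)).continuousAt.continuousWithinAt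
    · intro s hs
      exact (hh s ((le_max_left _ _).trans hs.1)).hasDerivWithinAt
    · simp
    · intro s hs
      rw [norm_smul, hnorm]
      have := (hT0 s ((le_max_right _ _).trans hs.1)).le
      rw [dist_zero_right] at this
      calc _ ≤ Real.exp (-μ.re * s) * (ε / 2 * (-μ.re)) := by gcongr
        _ = _ := by ring
  have hdecay : Tendsto (fun t : ℝ => Real.exp (μ.re * t) * ‖h T‖) atTop (𝓝 0) := by
    have : Tendsto (fun t : ℝ => Real.exp (μ.re * t)) atTop (𝓝 0) :=
      Real.tendsto_exp_atBot.comp (tendsto_id.const_mul_atTop_of_neg hμ)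
    simpa using this.mul_const ‖h T‖
  rw [Metric.tendsto_atTop] at hdecay
  obtain ⟨T1, hT1⟩ := hdecay (ε / 2) (by positivity)
  refine ⟨max T T1, fun t ht => ?_⟩
  have h1 := hT1 t ((le_max_right _ _).trans ht)
  have h2 := hbound t ((le_max_left _ _).trans ht)
  rw [Real.dist_eq, sub_zero] at h1
  have h1' := (le_abs_self _).trans_lt h1
  rw [dist_zero_right]
  have h3 : ‖h t‖ = Real.exp (-μ.re * t) * ‖f t‖ := by
    rw [← hnorm]; exact norm_smul _ _
  have h4 : Real.exp (μ.re * t) * Real.exp (-μ.re * t) = 1 := by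
    rw [← Real.exp_add]; simp
  have h5 : ‖f t‖ = Real.exp (μ.re * t) * ‖h t‖ := by
    rw [h3, ← mul_assoc, h4, one_mul]
  have h6 : 0 < Real.exp (μ.re * t) := Real.exp_pos _
  have h7 : 0 < Real.exp (-μ.re * T) := Real.exp_pos _
  have h8 : Real.exp (μ.re * t) * ‖h t‖ ≤ Real.exp (μ.re * t) * (‖h T‖ + ε / 2 * Real.exp (-μ.re * t)) := by
    gcongr
    refine h2.trans ?_
    gcongr
    linarith
  have h9 : Real.exp (μ.re * t) * (‖h T‖ + ε / 2 * Real.exp (-μ.re * t)) = Real.exp (μ.re * t) * ‖h T‖ + ε / 2 := by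
    rw [mul_add, mul_left_comm, h4, mul_one]
  linarith

lemma aux_deriv_mulVec {𝕜 : Type*} [RCLike 𝕜] {n m : ℕ} (N : Matrix (Fin m) (Fin n) 𝕜) (z : ℝ → Fin n → 𝕜) (z' : Fin n → 𝕜) (t : ℝ)
    (h : HasDerivAt z z' t) : HasDerivAt (fun s => N *ᵥ z s) (N *ᵥ z') t := by
  rw [hasDerivAt_pi] at h ⊢
  intro i
  simp only [mulVec, dotProduct]
  exact HasDerivAt.fun_sum fun j _ => (h j).const_mul _

lemma aux_list {n : ℕ} (M : Matrix (Fin n) (Fin n) ℂ) (t₀ : ℝ) (L : List ℂ) (hL : ∀ μ ∈ L, μ.re < 0) :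
    ∀ (z : ℝ → Fin n → ℂ), (∀ t, t₀ ≤ t → HasDerivAt z (M *ᵥ z t) t) →
    (∀ t, (L.map (fun μ => M - μ • (1 : Matrix (Fin n) (Fin n) ℂ))).prod *ᵥ z t = 0) →
    Tendsto z atTop (𝓝 0) := by
  induction L using List.reverseRecOn with
  | nil => 
    intro z _ h
    have : z = fun _ => 0 := by funext t; simpa using h t
    rw [this]; exact tendsto_const_nhds
  | append_singleton L μ ih =>
    intro z hz h
    have := ih (fun ν hν => hL ν (by simp [hν])) (fun t => (M - μ • (1 : Matrix (Fin n) (Fin n) ℂ)) *ᵥ z t) ?_ ?_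
    · refine aux_scalar μ (hL μ (by simp)) t₀ z _ (fun t ht => ?_) this
      have e : μ • z t + (M - μ • (1 : Matrix (Fin n) (Fin n) ℂ)) *ᵥ z t = M *ᵥ z t := by
        simp [sub_mulVec, smul_mulVec]
      rw [e]
      exact hz t ht
    · intro t ht
      have := aux_deriv_mulVec (M - μ • (1 : Matrix (Fin n) (Fin n) ℂ)) _ _ _ (hz t ht)
      have e : M *ᵥ ((M - μ • (1 : Matrix (Fin n) (Fin n) ℂ)) *ᵥ z t) = (M - μ • (1 : Matrix (Fin n) (Fin n) ℂ)) *ᵥ (M *ᵥ z t) := by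
        simp [mulVec_mulVec, mul_sub, sub_mul]
      rw [e]
      exact this
    · intro t
      simpa [mulVec_mulVec] using h t

lemma aux_hurwitz {n : ℕ} (M : Matrix (Fin n) (Fin n) ℂ) (hM : ∀ μ ∈ spectrum ℂ M, μ.re < 0) (t₀ : ℝ)
    (z : ℝ → Fin n → ℂ) (hz : ∀ t, t₀ ≤ t → HasDerivAt z (M *ᵥ z t) t) : Tendsto z atTop (𝓝 0) := by
  have hs := (IsAlgClosed.splits M.charpoly).eq_prod_roots_of_monic M.charpoly_monic
  have h0 := M.aeval_self_charpoly
  refine aux_list M t₀ M.charpoly.roots.toList ?_ z hz ?_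
  · intro μ hμ
    apply hM
    rw [Matrix.mem_spectrum_iff_isRoot_charpoly]
    exact (Polynomial.mem_roots'.1 (Multiset.mem_toList.1 hμ)).2
  · intro t
    rw [hs] at h0
    rw [← Multiset.coe_toList M.charpoly.roots, Multiset.map_coe, Multiset.prod_coe, map_list_prod, List.map_map] at h0
    have : (M.charpoly.roots.toList.map (fun μ => M - μ • (1 : Matrix (Fin n) (Fin n) ℂ))).prod = 0 := by
      rw [← h0]; congr 2; funext μ; simp [Algebra.algebraMap_eq_smul_one]
    rw [this, zero_mulVec]

lemma aux_real {n : ℕ} (M : Matrix (Fin n) (Fin n) ℝ) (hM : IsHurwitz M) (t₀ : ℝ)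
    (x : ℝ → Fin n → ℝ) (hx : ∀ t, t₀ ≤ t → HasDerivAt x (M *ᵥ x t) t) : Tendsto x atTop (𝓝 0) := by
  have h := aux_hurwitz (M.map Complex.ofReal) hM t₀ (fun t i => (x t i : ℂ)) ?_
  · rw [tendsto_pi_nhds] at h ⊢
    intro i
    have := (Complex.continuous_re.tendsto _).comp (h i)
    simpa [Function.comp_def] using this
  · intro t ht
    have := hx t ht
    rw [hasDerivAt_pi] at this ⊢
    intro i
    have h2 := (this i).ofReal_comp
    have e : ((M.map Complex.ofReal) *ᵥ fun i => (x t i : ℂ)) i = (((M *ᵥ x t) i : ℝ) : ℂ) := by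
      simp [mulVec, dotProduct]
    rw [e]
    exact h2

lemma aux_dot {n : ℕ} (f g : ℝ → Fin n → ℝ) (f' g' : Fin n → ℝ) (t : ℝ)
    (hf : HasDerivAt f f' t) (hg : HasDerivAt g g' t) :
    HasDerivAt (fun s => f s ⬝ᵥ g s) (f' ⬝ᵥ g t + f t ⬝ᵥ g') t := by
  rw [hasDerivAt_pi] at hf hg
  simp only [dotProduct, ← Finset.sum_add_distrib]
  exact HasDerivAt.fun_sum fun j _ => (hf j).mul (hg j)

lemma aux_policy {n m : ℕ} (A : Matrix (Fin n) (Fin n) ℝ) (B : Matrix (Fin n) (Fin m) ℝ)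
    (Q : Matrix (Fin n) (Fin n) ℝ) (R : Matrix (Fin m) (Fin m) ℝ) (hR : R.PosDef)
    (P : Matrix (Fin n) (Fin n) ℝ) (hP : Pᵀ = P) (hARE : SolvesARE A B Q R P) :
    PolicyEval A B Q R (ImprovedGain A B R P) P := by
  have hRT : Rᵀ = R := by simpa using hR.isHermitian.eq
  have hRu : IsUnit R.det := (Matrix.isUnit_iff_isUnit_det R).1 hR.isUnit
  have hRi : (R⁻¹)ᵀ = R⁻¹ := by rw [transpose_nonsing_inv, hRT]
  unfold PolicyEval
  unfold SolvesARE at hARE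
  have h1 : (ImprovedGain A B R P)ᵀ * R = -(P * A⁻¹ * B) := by
    unfold ImprovedGain
    simp only [transpose_neg, transpose_mul, transpose_transpose, hP, hRi, Matrix.neg_mul]
    simp only [← Matrix.mul_assoc]
    rw [Matrix.mul_assoc _ R⁻¹ R, nonsing_inv_mul _ hRu, Matrix.mul_one]
  have h2 : (ImprovedGain A B R P)ᵀ = -(P * A⁻¹ * B * R⁻¹) := by
    unfold ImprovedGain
    simp only [transpose_neg, transpose_mul, transpose_transpose, hP, hRi, ← Matrix.mul_assoc]
  have h3 : P * A⁻¹ * B * ImprovedGain A B R P = -(P * A⁻¹ * B * R⁻¹ * Bᵀ * (A⁻¹)ᵀ * P) := by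
    unfold ImprovedGain
    simp only [Matrix.mul_neg, ← Matrix.mul_assoc]
  have e1 : P * (A⁻¹ * (1 + B * ImprovedGain A B R P)) = P * A⁻¹ + P * A⁻¹ * B * ImprovedGain A B R P := by
    simp only [Matrix.mul_add, Matrix.mul_one, Matrix.mul_assoc]
  have e2 : (A⁻¹ * (1 + B * ImprovedGain A B R P))ᵀ * P = (A⁻¹)ᵀ * P + (ImprovedGain A B R P)ᵀ * Bᵀ * (A⁻¹)ᵀ * P := by
    simp only [transpose_mul, transpose_add, transpose_one, Matrix.add_mul, Matrix.one_mul, Matrix.mul_assoc]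
  rw [e1, e2, h1, h2, h3]
  rw [Matrix.neg_mul (P * A⁻¹ * B) (ImprovedGain A B R P), h3, ← hARE]
  simp only [Matrix.neg_mul]
  abel

/-- Optimal cost of the Riccati gain: if `P* > 0` solves the derivative-feedback
ARE and `K* = −R⁻¹ Bᵀ A⁻ᵀ P*` is stabilizing, then along the closed-loop
trajectory starting at `x₀` at time `t₀`, with `u = −K* x'`, the quadratic cost
`∫_{t₀}^∞ (x'ᵀ Q x' + uᵀ R u) dτ` converges and equals `x₀ᵀ P* x₀`. -/
theorem optimal_cost_equals_riccati {n m : ℕ} (hn : 0 < n) (hm : 0 < m)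
    (A : Matrix (Fin n) (Fin n) ℝ) (B : Matrix (Fin n) (Fin m) ℝ)
    (Q : Matrix (Fin n) (Fin n) ℝ) (R : Matrix (Fin m) (Fin m) ℝ)
    (hA : IsUnit A) (hQ : Q.PosSemidef) (hR : R.PosDef)
    (Pstar : Matrix (Fin n) (Fin n) ℝ)
    (hPstar : Pstar.PosDef) (hARE : SolvesARE A B Q R Pstar)
    (hKstar : IsStabilizing A B (ImprovedGain A B R Pstar))
    (t₀ : ℝ) (x₀ : Fin n → ℝ) (x : ℝ → Fin n → ℝ)
    (hx : ∀ t : ℝ, t₀ ≤ t →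
      HasDerivAt x (((1 + B * ImprovedGain A B R Pstar)⁻¹ * A).mulVec (x t)) t)
    (hx₀ : x t₀ = x₀)
    (u : ℝ → Fin m → ℝ)
    (hu : ∀ t : ℝ, u t = -(ImprovedGain A B R Pstar).mulVec (deriv x t)) :
    IntegrableOn
      (fun τ => deriv x τ ⬝ᵥ Q.mulVec (deriv x τ) + u τ ⬝ᵥ R.mulVec (u τ))
      (Set.Ioi t₀) ∧
    ∫ τ in Set.Ioi t₀,
        (deriv x τ ⬝ᵥ Q.mulVec (deriv x τ) + u τ ⬝ᵥ R.mulVec (u τ)) =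
      x₀ ⬝ᵥ Pstar.mulVec x₀ := by
  obtain ⟨hU, hH⟩ := hKstar
  have hPT : Pstarᵀ = Pstar := by simpa using hPstar.isHermitian.eq
  have hpe := aux_policy A B Q R hR Pstar hPT hARE
  unfold PolicyEval at hpe
  set K := ImprovedGain A B R Pstar with hK
  set M := (1 + B * K)⁻¹ * A with hM
  set N := A⁻¹ * (1 + B * K) with hN
  have hNM : N * M = 1 := by
    have h1 : IsUnit (1 + B * K).det := (Matrix.isUnit_iff_isUnit_det _).1 hU
    have h2 : IsUnit A.det := (Matrix.isUnit_iff_isUnit_det _).1 hA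
    rw [hN, hM, Matrix.mul_assoc, ← Matrix.mul_assoc (1 + B * K), mul_nonsing_inv _ h1, Matrix.one_mul,
      nonsing_inv_mul _ h2]
  have hlim := aux_real M hH t₀ x hx
  have hd : ∀ t, t₀ ≤ t → x t = N *ᵥ deriv x t := by
    intro t ht
    rw [(hx t ht).deriv, mulVec_mulVec, hNM, one_mulVec]
  have hnn : ∀ t, 0 ≤ deriv x t ⬝ᵥ Q *ᵥ (deriv x t) + u t ⬝ᵥ R *ᵥ (u t) := by
    intro t
    have h1 := hQ.dotProduct_mulVec_nonneg (deriv x t)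
    have h2 := hR.posSemidef.dotProduct_mulVec_nonneg (u t)
    simp only [star_trivial] at h1 h2
    exact add_nonneg h1 h2
  have hV : ∀ t ∈ Set.Ici t₀, HasDerivAt (fun s => -(x s ⬝ᵥ Pstar *ᵥ x s))
      (deriv x t ⬝ᵥ Q *ᵥ (deriv x t) + u t ⬝ᵥ R *ᵥ (u t)) t := by
    intro t ht
    have h0 := hx t ht
    rw [← h0.deriv] at h0
    have h1 := (aux_dot _ _ _ _ t h0 (aux_deriv_mulVec Pstar _ _ _ h0)).fun_neg
    refine h1.congr_deriv ?_
    rw [hd t ht, hu t]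
    generalize deriv x t = y
    have h3 : y ⬝ᵥ ((Pstar * N + Nᵀ * Pstar + Q + Kᵀ * R * K) *ᵥ y) = 0 := by
      rw [hpe]; simp
    have e1 : (N *ᵥ y) ⬝ᵥ Pstar *ᵥ y = y ⬝ᵥ (Nᵀ * Pstar) *ᵥ y := by
      rw [← mulVec_mulVec y Nᵀ Pstar, dotProduct_mulVec y Nᵀ, vecMul_transpose]
    have e2 : (-(K *ᵥ y)) ⬝ᵥ R *ᵥ (-(K *ᵥ y)) = y ⬝ᵥ (Kᵀ * R * K) *ᵥ y := by
      rw [mulVec_neg, neg_dotProduct_neg, ← mulVec_mulVec, ← mulVec_mulVec, dotProduct_mulVec y Kᵀ, vecMul_transpose]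
    simp only [add_mulVec, dotProduct_add] at h3
    rw [e1, e2, mulVec_mulVec]
    linarith
  have hl : Tendsto (fun s => -(x s ⬝ᵥ Pstar *ᵥ x s)) atTop (𝓝 0) := by
    have hc : Continuous (fun v : Fin n → ℝ => -(v ⬝ᵥ Pstar *ᵥ v)) := by fun_prop
    simpa [Function.comp_def] using (hc.tendsto 0).comp hlim
  refine ⟨integrableOn_Ioi_deriv_of_nonneg' hV (fun t _ => hnn t) hl, ?_⟩
  rw [integral_Ioi_of_hasDerivAt_of_nonneg' hV (fun t _ => hnn t) hl, hx₀]
  simp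
end

section
/- Let K : m×n and let P be a symmetric real n×n matrix satisfying the policy-evaluation equation for K, and set K⁺ = −R⁻¹ Bᵀ A⁻ᵀ P. Let u : ℝ → ℝᵐ be continuous and x : ℝ → ℝⁿ be continuously differentiable with x'(t) = A x(t) + B u(t) for all t. Then for all t and all T > 0: x(t)ᵀ P x(t) − x(t+T)ᵀ P x(t+T) = ∫ₜ^{t+T} x'(τ)ᵀ (Q + Kᵀ R K) x'(τ) dτ − 2 ∫ₜ^{t+T} ( u(τ) + K x'(τ) )ᵀ R K⁺ x'(τ) dτ. -/
open Matrix MeasureTheory Filter Topology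

theorem pointwise_aux {n m : ℕ}
    (A : Matrix (Fin n) (Fin n) ℝ) (B : Matrix (Fin n) (Fin m) ℝ)
    (Q : Matrix (Fin n) (Fin n) ℝ) (R : Matrix (Fin m) (Fin m) ℝ)
    (hA : IsUnit A) (hR : R.PosDef)
    (K : Matrix (Fin m) (Fin n) ℝ) (P : Matrix (Fin n) (Fin n) ℝ)
    (hPsymm : P.IsSymm) (hPE : PolicyEval A B Q R K P)
    (a : Fin n → ℝ) (b : Fin m → ℝ) (v : Fin n → ℝ) (hv : v = A *ᵥ a + B *ᵥ b) :
    v ⬝ᵥ (Q + Kᵀ * R * K) *ᵥ v - 2 * ((b + K *ᵥ v) ⬝ᵥ (R * ImprovedGain A B R P) *ᵥ v)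
      = - (v ⬝ᵥ P *ᵥ a + a ⬝ᵥ P *ᵥ v) := by
  have hsym : ∀ y z : Fin n → ℝ, y ⬝ᵥ P *ᵥ z = z ⬝ᵥ P *ᵥ y := by
    intro y z
    rw [dotProduct_mulVec, ← mulVec_transpose, hPsymm.eq, dotProduct_comm]
  have hAd : IsUnit A.det := (Matrix.isUnit_iff_isUnit_det A).1 hA
  have hRd : IsUnit R.det := (Matrix.isUnit_iff_isUnit_det R).1 hR.isUnit
  have ha : A⁻¹ *ᵥ v = a + A⁻¹ *ᵥ (B *ᵥ b) := by
    rw [hv, mulVec_add, mulVec_mulVec, Matrix.nonsing_inv_mul A hAd, one_mulVec]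
  have hRK : R * ImprovedGain A B R P = -((A⁻¹ * B)ᵀ * P) := by
    unfold ImprovedGain
    rw [Matrix.mul_neg, Matrix.transpose_mul, ← Matrix.mul_assoc, ← Matrix.mul_assoc,
      ← Matrix.mul_assoc, Matrix.mul_nonsing_inv R hRd, Matrix.one_mul]
  have htr : ∀ {k : ℕ} (M : Matrix (Fin n) (Fin k) ℝ) (y : Fin k → ℝ) (z : Fin n → ℝ),
      y ⬝ᵥ Mᵀ *ᵥ z = (M *ᵥ y) ⬝ᵥ z := by
    intro k M y z
    rw [dotProduct_mulVec, vecMul_transpose]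
  have hQ : Q + Kᵀ * R * K = -(P * (A⁻¹ * (1 + B * K)) + (A⁻¹ * (1 + B * K))ᵀ * P) := by
    unfold PolicyEval at hPE
    rw [eq_neg_iff_add_eq_zero, ← hPE]
    abel
  have hS : (A⁻¹ * (1 + B * K)) *ᵥ v = a + (A⁻¹ * B) *ᵥ (b + K *ᵥ v) := by
    rw [Matrix.mul_add, Matrix.mul_one, add_mulVec, ha, mulVec_add]
    simp only [mulVec_mulVec, Matrix.mul_assoc, add_assoc]
  rw [hQ, hRK, neg_mulVec, neg_mulVec, add_mulVec, ← mulVec_mulVec v P, ← mulVec_mulVec v (A⁻¹ * (1 + B * K))ᵀ P,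
    ← mulVec_mulVec _ (A⁻¹ * B)ᵀ P, dotProduct_neg, dotProduct_neg, dotProduct_add, htr, htr, hS,
    hsym v, add_dotProduct, hsym v a]
  ring

/-- Off-policy integral identity underlying model-free policy iteration:
if the symmetric matrix `P` solves the policy-evaluation equation for `K` and
`K⁺ = −R⁻¹ Bᵀ A⁻ᵀ P`, then along any trajectory of `x' = A x + B u` (with `u`
continuous and `x` continuously differentiable) and for all `t` and `T > 0`,
`x(t)ᵀPx(t) − x(t+T)ᵀPx(t+T) = ∫ₜ^{t+T} x'ᵀ(Q + KᵀRK)x' dτ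
  − 2∫ₜ^{t+T} (u + Kx')ᵀ R K⁺ x' dτ`. -/
theorem off_policy_integral_identity {n m : ℕ} (hn : 0 < n) (hm : 0 < m)
    (A : Matrix (Fin n) (Fin n) ℝ) (B : Matrix (Fin n) (Fin m) ℝ)
    (Q : Matrix (Fin n) (Fin n) ℝ) (R : Matrix (Fin m) (Fin m) ℝ)
    (hA : IsUnit A) (hQ : Q.PosSemidef) (hR : R.PosDef)
    (K : Matrix (Fin m) (Fin n) ℝ) (P : Matrix (Fin n) (Fin n) ℝ)
    (hPsymm : P.IsSymm) (hPE : PolicyEval A B Q R K P)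
    (u : ℝ → Fin m → ℝ) (x : ℝ → Fin n → ℝ)
    (hu : Continuous u)
    (hx : ∀ t : ℝ, HasDerivAt x (A.mulVec (x t) + B.mulVec (u t)) t)
    (t T : ℝ) (hT : 0 < T) :
    x t ⬝ᵥ P.mulVec (x t) - x (t + T) ⬝ᵥ P.mulVec (x (t + T)) =
      (∫ τ in t..(t + T), deriv x τ ⬝ᵥ (Q + Kᵀ * R * K).mulVec (deriv x τ)) -
      2 * ∫ τ in t..(t + T),
        (u τ + K.mulVec (deriv x τ)) ⬝ᵥ
          (R * ImprovedGain A B R P).mulVec (deriv x τ) := by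
  have hd : deriv x = fun τ => A *ᵥ (x τ) + B *ᵥ (u τ) := funext fun τ => (hx τ).deriv
  have hxc : Continuous x := continuous_iff_continuousAt.2 fun τ => (hx τ).continuousAt
  have hdc : Continuous (deriv x) := by
    rw [hd]
    exact (continuous_const.matrix_mulVec hxc).add (continuous_const.matrix_mulVec hu)
  have hc1 : Continuous fun τ => deriv x τ ⬝ᵥ (Q + Kᵀ * R * K) *ᵥ (deriv x τ) :=
    hdc.dotProduct (continuous_const.matrix_mulVec hdc)
  have hc2 : Continuous fun τ => (u τ + K *ᵥ (deriv x τ)) ⬝ᵥ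
      (R * ImprovedGain A B R P) *ᵥ (deriv x τ) :=
    (hu.add (continuous_const.matrix_mulVec hdc)).dotProduct
      (continuous_const.matrix_mulVec hdc)
  have hD : ∀ τ, HasDerivAt (fun s => -(x s ⬝ᵥ P *ᵥ (x s)))
      (deriv x τ ⬝ᵥ (Q + Kᵀ * R * K) *ᵥ (deriv x τ) - 2 * ((u τ + K *ᵥ (deriv x τ)) ⬝ᵥ
      (R * ImprovedGain A B R P) *ᵥ (deriv x τ))) τ := by
    intro τ
    rw [pointwise_aux A B Q R hA hR K P hPsymm hPE (x τ) (u τ) (deriv x τ) (by rw [hd])]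
    have h0 : HasDerivAt x (deriv x τ) τ := (hx τ).differentiableAt.hasDerivAt
    have h1 := hasDerivAt_pi.1 h0
    have h2 : ∀ i, HasDerivAt (fun s => (P *ᵥ x s) i) ((P *ᵥ deriv x τ) i) τ := by
      intro i
      simp only [mulVec, dotProduct]
      exact HasDerivAt.fun_sum fun j _ => (h1 j).const_mul (P i j)
    have h3 : HasDerivAt (fun s => x s ⬝ᵥ P *ᵥ (x s))
        (∑ i, (deriv x τ i * (P *ᵥ x τ) i + x τ i * (P *ᵥ deriv x τ) i)) τ :=
      HasDerivAt.fun_sum fun i _ => (h1 i).mul (h2 i)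
    rw [Finset.sum_add_distrib] at h3
    exact h3.neg
  have hI := intervalIntegral.integral_eq_sub_of_hasDerivAt (a := t) (b := t + T)
    (fun τ _ => hD τ) ((hc1.sub (hc2.const_mul 2)).intervalIntegrable _ _)
  rw [intervalIntegral.integral_sub (hc1.intervalIntegrable _ _)
    ((hc2.const_mul 2).intervalIntegrable _ _), intervalIntegral.integral_const_mul] at hI
  rw [hI]
  ring
end

section
/- If P* is a symmetric real n×n matrix satisfying the derivative-feedback algebraic Riccati equation and K* = −R⁻¹ Bᵀ A⁻ᵀ P*, then P* satisfies the policy-evaluation equation for K*, i.e., P*·(A⁻¹(I + B·K*)) + (A⁻¹(I + B·K*))ᵀ·P* + Q + K*ᵀ·R·K* = 0. -/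
open Matrix MeasureTheory Filter Topology

/-- An ARE solution evaluates its own improved gain: if the symmetric matrix
`P*` satisfies the derivative-feedback ARE and `K* = −R⁻¹ Bᵀ A⁻ᵀ P*`, then `P*`
satisfies the policy-evaluation equation for `K*`. -/
theorem are_solution_is_self_evaluating {n m : ℕ} (hn : 0 < n) (hm : 0 < m)
    (A : Matrix (Fin n) (Fin n) ℝ) (B : Matrix (Fin n) (Fin m) ℝ)
    (Q : Matrix (Fin n) (Fin n) ℝ) (R : Matrix (Fin m) (Fin m) ℝ)
    (hA : IsUnit A) (hQ : Q.PosSemidef) (hR : R.PosDef)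
    (Pstar : Matrix (Fin n) (Fin n) ℝ)
    (hPsymm : Pstar.IsSymm) (hARE : SolvesARE A B Q R Pstar) :
    PolicyEval A B Q R (ImprovedGain A B R Pstar) Pstar := by
  have hRt : Rᵀ = R := by
    have h := hR.isHermitian.eq
    rwa [Matrix.conjTranspose_eq_transpose_of_trivial] at h
  have hSt : (R⁻¹)ᵀ = R⁻¹ := by rw [Matrix.transpose_nonsing_inv, hRt]
  have hRS : R * R⁻¹ = 1 :=
    Matrix.mul_nonsing_inv R ((Matrix.isUnit_iff_isUnit_det R).1 hR.isUnit)
  have hPt : Pstarᵀ = Pstar := hPsymm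
  unfold SolvesARE at hARE
  unfold PolicyEval ImprovedGain
  generalize A⁻¹ = C at *
  generalize R⁻¹ = S at *
  have hX : ∀ X : Matrix (Fin m) (Fin n) ℝ, R * (S * X) = X := fun X => by
    rw [← Matrix.mul_assoc, hRS, Matrix.one_mul]
  rw [← hARE]
  simp only [Matrix.transpose_mul, Matrix.transpose_add, Matrix.transpose_neg,
    Matrix.transpose_one, Matrix.transpose_transpose, hPt, hSt, Matrix.mul_assoc,
    Matrix.mul_add, Matrix.add_mul, Matrix.mul_neg, Matrix.neg_mul, Matrix.mul_one,
    Matrix.one_mul, hX, neg_neg]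
  abel
end

section
/- Let K : m×n and let P be a symmetric real n×n matrix satisfying the policy-evaluation equation for K. If the policy-improvement update leaves K fixed, i.e., K = −R⁻¹ Bᵀ A⁻ᵀ P, then P satisfies the derivative-feedback algebraic Riccati equation. In other words, every fixed point of the policy iteration recursion is a solution of the ARE. -/
open Matrix MeasureTheory Filter Topology

/-- Fixed points of policy iteration solve the ARE: if the symmetric matrix `P`
satisfies the policy-evaluation equation for `K` and the policy-improvement
update leaves `K` fixed, i.e. `K = −R⁻¹ Bᵀ A⁻ᵀ P`, then `P` satisfies the
derivative-feedback algebraic Riccati equation. -/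
theorem fixed_point_solves_are {n m : ℕ} (hn : 0 < n) (hm : 0 < m)
    (A : Matrix (Fin n) (Fin n) ℝ) (B : Matrix (Fin n) (Fin m) ℝ)
    (Q : Matrix (Fin n) (Fin n) ℝ) (R : Matrix (Fin m) (Fin m) ℝ)
    (hA : IsUnit A) (hQ : Q.PosSemidef) (hR : R.PosDef)
    (K : Matrix (Fin m) (Fin n) ℝ) (P : Matrix (Fin n) (Fin n) ℝ)
    (hPsymm : P.IsSymm) (hPE : PolicyEval A B Q R K P)
    (hfix : K = ImprovedGain A B R P) :
    SolvesARE A B Q R P := by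
  have hRT : Rᵀ = R := by
    have h := hR.isHermitian
    rwa [Matrix.IsHermitian, Matrix.conjTranspose_eq_transpose_of_trivial] at h
  have hdet : IsUnit R.det := (Matrix.isUnit_iff_isUnit_det R).1 hR.isUnit
  have hST : (R⁻¹)ᵀ = R⁻¹ := by rw [Matrix.transpose_nonsing_inv, hRT]
  have hRS : ∀ X : Matrix (Fin m) (Fin n) ℝ, R * (R⁻¹ * X) = X := fun X => by
    rw [← Matrix.mul_assoc, Matrix.mul_nonsing_inv R hdet, Matrix.one_mul]
  have hP : Pᵀ = P := hPsymm
  unfold PolicyEval at hPE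
  unfold SolvesARE
  rw [hfix] at hPE
  unfold ImprovedGain at hPE
  generalize A⁻¹ = N at *
  generalize R⁻¹ = S at *
  rw [← hPE]
  simp only [Matrix.transpose_mul, Matrix.transpose_add, Matrix.transpose_neg,
    Matrix.transpose_one, Matrix.transpose_transpose, hST, hP, Matrix.mul_add, Matrix.add_mul,
    Matrix.mul_neg, Matrix.neg_mul, Matrix.mul_one, Matrix.one_mul, Matrix.mul_assoc, hRS, neg_neg]
  abel
end

section
/- Let K be a stabilizing derivative-feedback gain, P a symmetric positive definite solution of the policy-evaluation equation for K, and K⁺ = −R⁻¹ Bᵀ A⁻ᵀ P, and suppose I + B·K⁺ is invertible. If x : ℝ → ℝⁿ is differentiable with x'(t) = (I + B·K⁺)⁻¹·A · x(t) for all t (the closed-loop trajectory under the improved gain), then the Lyapunov function t ↦ x(t)ᵀ P x(t) is monotone nonincreasing in t. -/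
open Matrix MeasureTheory Filter Topology

/-- Lyapunov decrease along the improved closed loop: if `P > 0` solves the
policy-evaluation equation for a stabilizing gain `K`, `K⁺ = −R⁻¹ Bᵀ A⁻ᵀ P`,
`I + B K⁺` is invertible, and `x` solves `x' = (I + B K⁺)⁻¹ A x`, then
`t ↦ x(t)ᵀ P x(t)` is monotone nonincreasing. -/
theorem lyapunov_nonincreasing_along_improved_loop {n m : ℕ} (hn : 0 < n) (hm : 0 < m)
    (A : Matrix (Fin n) (Fin n) ℝ) (B : Matrix (Fin n) (Fin m) ℝ)
    (Q : Matrix (Fin n) (Fin n) ℝ) (R : Matrix (Fin m) (Fin m) ℝ)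
    (hA : IsUnit A) (hQ : Q.PosSemidef) (hR : R.PosDef)
    (K : Matrix (Fin m) (Fin n) ℝ) (P : Matrix (Fin n) (Fin n) ℝ)
    (hK : IsStabilizing A B K) (hP : P.PosDef)
    (hPE : PolicyEval A B Q R K P)
    (hinv : IsUnit (1 + B * ImprovedGain A B R P))
    (x : ℝ → Fin n → ℝ)
    (hx : ∀ t : ℝ,
      HasDerivAt x (((1 + B * ImprovedGain A B R P)⁻¹ * A).mulVec (x t)) t) :
    Antitone (fun t : ℝ => x t ⬝ᵥ P.mulVec (x t)) := by
  set L := ImprovedGain A B R P with hLdef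
  have hRt : Rᵀ = R := by simpa using hR.isHermitian.eq
  have hPt : Pᵀ = P := by simpa using hP.isHermitian.eq
  have hRdet : IsUnit R.det := (Matrix.isUnit_iff_isUnit_det R).1 hR.isUnit
  have hAdet : IsUnit A.det := (Matrix.isUnit_iff_isUnit_det A).1 hA
  have hIdet : IsUnit (1 + B * L).det := (Matrix.isUnit_iff_isUnit_det _).1 hinv
  have h1 : Bᵀ * ((A⁻¹)ᵀ * P) = -(R * L) := by
    rw [hLdef, ImprovedGain, Matrix.mul_neg, neg_neg, Matrix.mul_assoc, Matrix.mul_assoc,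
      Matrix.mul_nonsing_inv_cancel_left _ _ hRdet]
  have h2 : P * (A⁻¹ * B) = -(Lᵀ * R) := by
    have := congrArg Matrix.transpose h1
    simpa [Matrix.transpose_mul, hRt, hPt, Matrix.mul_assoc] using this
  have key : P * (A⁻¹ * (1 + B * L)) + (A⁻¹ * (1 + B * L))ᵀ * P
      = -(Q + (K - L)ᵀ * R * (K - L) + Lᵀ * R * L) := by
    have e : ∀ G : Matrix (Fin m) (Fin n) ℝ,
        P * (A⁻¹ * (1 + B * G)) + (A⁻¹ * (1 + B * G))ᵀ * P
        = P * A⁻¹ + (A⁻¹)ᵀ * P - Lᵀ * R * G - Gᵀ * (R * L) := by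
      intro G
      have a1 : P * (A⁻¹ * (B * G)) = -(Lᵀ * R * G) := by
        rw [← Matrix.mul_assoc A⁻¹, ← Matrix.mul_assoc P, h2, Matrix.neg_mul]
      have a2 : (A⁻¹ * (B * G))ᵀ * P = -(Gᵀ * (R * L)) := by
        rw [Matrix.transpose_mul, Matrix.transpose_mul, Matrix.mul_assoc, Matrix.mul_assoc, h1,
          Matrix.mul_neg]
      rw [Matrix.mul_add, Matrix.mul_add, Matrix.transpose_add, Matrix.add_mul, a1, a2,
        Matrix.mul_one]
      abel
    have hPE' := hPE
    unfold PolicyEval at hPE'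
    rw [e K] at hPE'
    rw [e L]
    have hS : P * A⁻¹ + (A⁻¹)ᵀ * P = Lᵀ * R * K + Kᵀ * (R * L) - Q - Kᵀ * R * K := by
      rw [← sub_eq_zero, ← hPE']
      abel
    rw [hS]
    simp only [Matrix.transpose_sub, Matrix.sub_mul, Matrix.mul_sub, Matrix.mul_assoc]
    abel
  have quad : ∀ (G : Matrix (Fin m) (Fin n) ℝ) (y : Fin n → ℝ),
      0 ≤ y ⬝ᵥ (Gᵀ * R * G) *ᵥ y := by
    intro G y
    have := (hR.posSemidef.conjTranspose_mul_mul_same G).dotProduct_mulVec_nonneg y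
    simpa using this
  have hd : ∀ t, HasDerivAt (fun t : ℝ => x t ⬝ᵥ P.mulVec (x t))
      ((((1 + B * L)⁻¹ * A) *ᵥ x t) ⬝ᵥ P *ᵥ x t
        + x t ⬝ᵥ P *ᵥ (((1 + B * L)⁻¹ * A) *ᵥ x t)) t := by
    intro t
    have hc := hasDerivAt_pi.1 (hx t)
    have hp : ∀ i, HasDerivAt (fun s => (P *ᵥ x s) i)
        ((P *ᵥ (((1 + B * L)⁻¹ * A) *ᵥ x t)) i) t := by
      intro i
      simp only [Matrix.mulVec, dotProduct]
      exact HasDerivAt.fun_sum fun j _ => (hc j).const_mul (P i j)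
    have := HasDerivAt.fun_sum (u := Finset.univ) fun i _ => (hc i).fun_mul (hp i)
    simpa only [dotProduct, Finset.sum_add_distrib] using this
  refine antitone_of_deriv_nonpos (fun t => (hd t).differentiableAt) fun t => ?_
  rw [(hd t).deriv]
  set y := ((1 + B * L)⁻¹ * A) *ᵥ x t with hy
  have hxy : x t = (A⁻¹ * (1 + B * L)) *ᵥ y := by
    rw [hy, Matrix.mulVec_mulVec, Matrix.mul_assoc,
      Matrix.mul_nonsing_inv_cancel_left _ _ hIdet, Matrix.nonsing_inv_mul _ hAdet,
      Matrix.one_mulVec]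
  have hfin : y ⬝ᵥ P *ᵥ x t + x t ⬝ᵥ P *ᵥ y
      = y ⬝ᵥ (P * (A⁻¹ * (1 + B * L)) + (A⁻¹ * (1 + B * L))ᵀ * P) *ᵥ y := by
    rw [hxy, Matrix.add_mulVec, dotProduct_add, Matrix.mulVec_mulVec]
    congr 1
    rw [← Matrix.mulVec_mulVec y (A⁻¹ * (1 + B * L))ᵀ P,
      Matrix.dotProduct_mulVec y (A⁻¹ * (1 + B * L))ᵀ, Matrix.vecMul_transpose]
  rw [hfin, key, Matrix.neg_mulVec, dotProduct_neg, Matrix.add_mulVec, Matrix.add_mulVec,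
    dotProduct_add, dotProduct_add]
  have q1 : 0 ≤ y ⬝ᵥ Q *ᵥ y := by simpa using hQ.dotProduct_mulVec_nonneg y
  linarith [quad (K - L) y, quad L y]
end

section
/- Let M be a Hurwitz real n×n matrix and S a real n×n matrix. If P₁ and P₂ are real n×n matrices each satisfying the Lyapunov equation P·M + Mᵀ·P + S = 0, then P₁ = P₂; that is, the Lyapunov equation associated with a Hurwitz matrix has at most one solution. -/
open Matrix

/-- The Lyapunov equation `P M + Mᵀ P + S = 0` associated with a Hurwitz matrix
`M` has at most one solution. -/
theorem lyapunov_unique_solution {n : ℕ} (hn : 0 < n)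
    (M S : Matrix (Fin n) (Fin n) ℝ) (hM : IsHurwitz M)
    (P₁ P₂ : Matrix (Fin n) (Fin n) ℝ)
    (h₁ : P₁ * M + Mᵀ * P₁ + S = 0)
    (h₂ : P₂ * M + Mᵀ * P₂ + S = 0) :
    P₁ = P₂ := by
  have : Nonempty (Fin n) := ⟨⟨0, hn⟩⟩
  have h : (P₁ - P₂) * M = -(Mᵀ) * (P₁ - P₂) := by
    have e : (P₁ * M + Mᵀ * P₁ + S) - (P₂ * M + Mᵀ * P₂ + S) = 0 := by rw [h₁, h₂, sub_zero]
    rw [← sub_eq_zero, ← e]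
    noncomm_ring
  set A : Matrix (Fin n) (Fin n) ℂ := M.map Complex.ofReal with hA
  set D : Matrix (Fin n) (Fin n) ℂ := (P₁ - P₂).map Complex.ofReal with hD
  have hc : D * A = -(Aᵀ) * D := by
    have := congrArg (fun X => Complex.ofRealHom.mapMatrix X) h
    simp only [map_mul, map_neg] at this
    exact this
  have hp : ∀ p : Polynomial ℂ, D * Polynomial.aeval A p = Polynomial.aeval (-(Aᵀ)) p * D := by
    intro p
    induction p using Polynomial.induction_on' with
    | add p q hp hq => simp only [map_add, mul_add, add_mul, hp, hq]
    | monomial k a =>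
      have hk : D * A ^ k = (-(Aᵀ)) ^ k * D := (SemiconjBy.pow_right (show SemiconjBy D A (-(Aᵀ)) from hc) k)
      simp only [Polynomial.aeval_monomial, ← Algebra.smul_def]
      rw [mul_smul_comm, smul_mul_assoc, hk]
  have h0 := hp A.charpoly
  rw [Matrix.aeval_self_charpoly, mul_zero] at h0
  have hu : IsUnit (Polynomial.aeval (-(Aᵀ)) A.charpoly) := by
    rw [← spectrum.zero_notMem_iff ℂ]
    intro hz
    rw [spectrum.map_polynomial_aeval_of_nonempty _ _ (spectrum.nonempty_of_isAlgClosed_of_finiteDimensional ℂ _)] at hz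
    obtain ⟨k, hk, hk0⟩ := hz
    have k1 : k ∈ spectrum ℂ A := Matrix.mem_spectrum_iff_isRoot_charpoly.2 hk0
    rw [← spectrum.neg_eq, Set.mem_neg, Matrix.mem_spectrum_iff_isRoot_charpoly, Matrix.charpoly_transpose,
      ← Matrix.mem_spectrum_iff_isRoot_charpoly] at hk
    have a1 := hM _ k1
    have a2 := hM _ hk
    simp at a2
    linarith
  have hD0 : D = 0 := (hu.mul_right_eq_zero).1 h0.symm
  ext i j
  have := congrFun (congrFun hD0 i) j
  simp only [hD, Matrix.map_apply, Matrix.sub_apply, Matrix.zero_apply] at this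
  exact sub_eq_zero.1 (Complex.ofReal_eq_zero.1 this)
end

section
/- Let K be a stabilizing derivative-feedback gain and x_b ∈ ℝⁿ a constant measurement bias. Suppose x : ℝ → ℝⁿ is differentiable, the biased measurement is x̄(t) = x(t) + x_b, and x satisfies the closed loop under derivative feedback of the biased measurement: x'(t) = A x(t) + B u(t) with u(t) = −K·(x̄)'(t) for all t ≥ 0. Then x'(t) = (I + B·K)⁻¹·A · x(t) for all t ≥ 0 — the closed loop is independent of the bias x_b — and x(t) → 0 as t → ∞; i.e., the derivative-feedback loop drives the system to its true equilibrium despite the constant measurement bias. -/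
open Matrix Filter Topology

open Matrix Filter Topology

lemma df_scalar {E : Type*} [NormedAddCommGroup E] [NormedSpace ℂ E] (μ : ℂ) (hμ : μ.re < 0)
    (w f : ℝ → E) (hw : ∀ t : ℝ, 0 ≤ t → HasDerivAt w (μ • w t + f t) t)
    (hf : Tendsto f atTop (𝓝 0)) : Tendsto w atTop (𝓝 0) := by
  rw [Metric.tendsto_atTop]
  intro ε hε
  set a : ℝ := -μ.re with ha
  have ha0 : 0 < a := by linarith
  obtain ⟨T0, hT0⟩ := Metric.tendsto_atTop.1 hf (a * ε / 2) (by positivity)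
  set T := max T0 0 with hT
  set g : ℝ → E := fun t => Complex.exp (-μ * t) • w t with hg
  have hnexp : ∀ t : ℝ, ‖Complex.exp (-μ * t)‖ = Real.exp (a * t) := by
    intro t
    rw [Complex.norm_exp]
    simp [ha]
  have hgd : ∀ t : ℝ, 0 ≤ t → HasDerivAt g (Complex.exp (-μ * t) • f t) t := by
    intro t ht
    have h1 : HasDerivAt (fun t : ℝ => Complex.exp (-μ * t))
        (Complex.exp (-μ * t) * (-μ)) t := by
      have h0 : HasDerivAt (fun t : ℝ => -μ * (t : ℂ)) (-μ) t := by
        simpa using (Complex.ofRealCLM.hasDerivAt (x := t)).const_mul (-μ)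
      exact h0.cexp
    have h2 := h1.smul (hw t ht)
    refine h2.congr_deriv ?_
    rw [smul_add, smul_smul, mul_neg, neg_smul]
    abel
  set Bd : ℝ → ℝ := fun t => ‖g T‖ + ε / 2 * Real.exp (a * t) with hBd
  have hBdd : ∀ t, HasDerivAt Bd (a * ε / 2 * Real.exp (a * t)) t := by
    intro t
    have h0 : HasDerivAt (fun t : ℝ => a * t) a t := by
      simpa using (hasDerivAt_id t).const_mul a
    have := (h0.exp.const_mul (ε / 2)).const_add ‖g T‖
    refine this.congr_deriv ?_
    ring
  have hbound : ∀ t, T ≤ t → ‖g t‖ ≤ Bd t := by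
    intro t ht
    refine image_norm_le_of_norm_deriv_right_le_deriv_boundary (a := T) (b := t)
      (f := g) (f' := fun s => Complex.exp (-μ * s) • f s) (B := Bd)
      (B' := fun s => a * ε / 2 * Real.exp (a * s)) ?_ ?_ ?_ hBdd ?_ ⟨ht, le_rfl⟩
    · intro s hs
      exact (hgd s (le_trans (le_max_right _ _) hs.1)).continuousAt.continuousWithinAt
    · intro s hs
      exact (hgd s (le_trans (le_max_right _ _) hs.1)).hasDerivWithinAt
    · simp only [hBd]
      have : 0 < ε / 2 * Real.exp (a * T) := by positivity
      linarith
    · intro s hs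
      rw [norm_smul, hnexp, mul_comm]
      have := hT0 s (le_trans (le_max_left _ _) hs.1)
      rw [dist_zero_right] at this
      gcongr
  have hlim : Tendsto (fun t : ℝ => ‖g T‖ * Real.exp (-(a * t))) atTop (𝓝 0) := by
    have h1 : Tendsto (fun t : ℝ => a * t) atTop atTop := tendsto_id.const_mul_atTop ha0
    simpa using (Real.tendsto_exp_neg_atTop_nhds_zero.comp h1).const_mul ‖g T‖
  obtain ⟨T1, hT1⟩ := Metric.tendsto_atTop.1 hlim (ε / 2) (by positivity)
  refine ⟨max T T1, fun t ht => ?_⟩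
  have h1 := hbound t (le_trans (le_max_left _ _) ht)
  have h2 := hT1 t (le_trans (le_max_right _ _) ht)
  rw [dist_zero_right] at h2 ⊢
  have h2' := (le_abs_self _).trans_lt h2
  simp only [hBd] at h1
  rw [show ‖g t‖ = Real.exp (a * t) * ‖w t‖ by simp only [hg]; rw [norm_smul, hnexp]] at h1
  have he : 0 < Real.exp (a * t) := Real.exp_pos _
  rw [Real.exp_neg, ← div_eq_mul_inv, div_lt_iff₀ he] at h2'
  have : Real.exp (a * t) * ‖w t‖ < Real.exp (a * t) * ε := by linarith
  exact lt_of_mul_lt_mul_left this he.le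

lemma df_mulVec {n : ℕ} (N : Matrix (Fin n) (Fin n) ℂ) (w : ℝ → Fin n → ℂ) (w' : Fin n → ℂ) (t : ℝ)
    (h : HasDerivAt w w' t) : HasDerivAt (fun s => N *ᵥ w s) (N *ᵥ w') t := by
  rw [hasDerivAt_pi] at h ⊢
  intro i
  simp only [Matrix.mulVec, dotProduct]
  exact HasDerivAt.fun_sum fun j _ => (h j).const_mul _

open Polynomial in
lemma df_ind {n : ℕ} (M : Matrix (Fin n) (Fin n) ℂ) (s : Multiset ℂ) :
    (∀ μ ∈ s, μ.re < 0) → ∀ w : ℝ → Fin n → ℂ,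
    (∀ t : ℝ, 0 ≤ t → HasDerivAt w (M *ᵥ w t) t) →
    (∀ t : ℝ, (aeval M (s.map (fun μ => X - C μ)).prod) *ᵥ w t = 0) →
    Tendsto w atTop (𝓝 0) := by
  induction s using Multiset.induction with
  | empty =>
    intro _ w _ h
    have : w = fun _ => 0 := by
      funext t
      simpa using h t
    rw [this]
    exact tendsto_const_nhds
  | cons μ s ih =>
    intro hs w hw h
    have hN : aeval M (X - C μ) = M - μ • (1 : Matrix (Fin n) (Fin n) ℂ) := by
      simp [Algebra.algebraMap_eq_smul_one]
    have hv := ih (fun ν hν => hs ν (Multiset.mem_cons_of_mem hν))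
      (fun t => (M - μ • (1 : Matrix (Fin n) (Fin n) ℂ)) *ᵥ w t) ?_ ?_
    · refine df_scalar μ (hs μ (Multiset.mem_cons_self _ _)) w _ ?_ hv
      intro t ht
      refine (hw t ht).congr_deriv ?_
      simp [Matrix.sub_mulVec, Matrix.smul_mulVec]
    · intro t ht
      refine (df_mulVec (M - μ • (1 : Matrix (Fin n) (Fin n) ℂ)) w _ t (hw t ht)).congr_deriv ?_
      rw [Matrix.mulVec_mulVec, Matrix.mulVec_mulVec]
      congr 1
      simp [mul_sub, sub_mul]
    · intro t
      have := h t
      rw [Multiset.map_cons, Multiset.prod_cons, mul_comm, map_mul, hN] at this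
      rw [Matrix.mulVec_mulVec]
      exact this

lemma df_hurwitz {n : ℕ} (M : Matrix (Fin n) (Fin n) ℝ) (hM : IsHurwitz M) (x : ℝ → Fin n → ℝ)
    (hx : ∀ t : ℝ, 0 ≤ t → HasDerivAt x (M *ᵥ x t) t) : Tendsto x atTop (𝓝 0) := by
  have key : Tendsto (fun t => fun i => ((x t i : ℝ) : ℂ)) atTop (𝓝 (0 : Fin n → ℂ)) := by
    refine df_ind (M.map Complex.ofReal) (M.map Complex.ofReal).charpoly.roots ?_ _ ?_ ?_
    · intro μ hμ
      apply hM
      rw [Matrix.mem_spectrum_iff_isRoot_charpoly]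
      exact Polynomial.isRoot_of_mem_roots hμ
    · intro t ht
      rw [hasDerivAt_pi]
      intro i
      have := ((hasDerivAt_pi.1 (hx t ht)) i).ofReal_comp
      refine this.congr_deriv ?_
      simp [Matrix.mulVec, dotProduct]
    · intro t
      have h1 := (IsAlgClosed.splits (M.map Complex.ofReal).charpoly).eq_prod_roots_of_monic
        (Matrix.charpoly_monic _)
      rw [← h1, Matrix.aeval_self_charpoly, Matrix.zero_mulVec]
  rw [tendsto_pi_nhds] at key ⊢
  intro i
  have := (Complex.continuous_re.tendsto _).comp (key i)
  simpa [Function.comp_def] using this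

/-- Bias rejection of derivative feedback: if `K` is stabilizing and `x` solves
`x' = A x + B u` with `u = −K (x̄)'` where `x̄ = x + x_b` is a biased measurement
(`x_b` a constant bias), then the closed loop is `x' = (I + BK)⁻¹ A x`
independently of `x_b`, and `x(t) → 0` as `t → ∞`. -/
theorem derivative_feedback_rejects_bias {n m : ℕ} (hn : 0 < n) (hm : 0 < m)
    (A : Matrix (Fin n) (Fin n) ℝ) (B : Matrix (Fin n) (Fin m) ℝ)
    (hA : IsUnit A)
    (K : Matrix (Fin m) (Fin n) ℝ) (hK : IsStabilizing A B K)
    (xb : Fin n → ℝ) (x : ℝ → Fin n → ℝ)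
    (hdiff : Differentiable ℝ x)
    (hode : ∀ t : ℝ, 0 ≤ t →
      deriv x t =
        A.mulVec (x t) +
          B.mulVec (-(K.mulVec (deriv (fun s => x s + xb) t)))) :
    (∀ t : ℝ, 0 ≤ t → deriv x t = ((1 + B * K)⁻¹ * A).mulVec (x t)) ∧
    Tendsto x atTop (𝓝 0) := by
  have h1 : ∀ t : ℝ, 0 ≤ t → deriv x t = ((1 + B * K)⁻¹ * A).mulVec (x t) := by
    intro t ht
    have h := hode t ht
    have h0 : deriv (fun s => x s + xb) t = deriv x t := deriv_add_const xb
    rw [h0] at h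
    have h2 : (1 + B * K) *ᵥ deriv x t = A *ᵥ x t := by
      rw [Matrix.add_mulVec, Matrix.one_mulVec, ← Matrix.mulVec_mulVec]
      rw [Matrix.mulVec_neg] at h
      nth_rewrite 1 [h]
      abel
    rw [← Matrix.mulVec_mulVec, ← h2, Matrix.mulVec_mulVec,
      Matrix.nonsing_inv_mul _ ((Matrix.isUnit_iff_isUnit_det _).1 hK.1), Matrix.one_mulVec]
  refine ⟨h1, df_hurwitz _ hK.2 x fun t ht => ?_⟩
  rw [← h1 t ht]
  exact (hdiff t).hasDerivAt
end
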